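/- arXiv:1109.5880 — 3 statements merged into one kernel-verified Lean document; each statement's English description precedes it below -/
import Mathlib

section
/- Let {X_t}_{t≥1} be identically distributed, pairwise asymptotically independent positive random variables and {Θ_t}_{t≥1} positive random variables satisfying the RW moment conditions for some α>0, with the sequence {Θ_t} independent of the sequence {X_t}. If the function x ↦ Σ_{t=1}^∞ P[Θ_t X_t > x] is regularly varying of index −α, then Σ_{t=1}^∞ P[Θ_t X_t > x] ~ P[X_(∞) > x] as x→∞, where X_(∞) = Σ_{t=1}^∞ Θ_t X_t, and X_(∞) is finite almost surely. -/
open MeasureTheory ProbabilityTheory Filter Topology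
open scoped ENNReal

noncomputable section

/-- A function, positive on `(0,∞)`, is regularly varying at infinity with index `ρ`:
for every `t > 0`, `f(tx)/f(x) → t^ρ` as `x → ∞`. -/
def RegVarying (f : ℝ → ℝ) (ρ : ℝ) : Prop :=
  (∀ x : ℝ, 0 < x → 0 < f x) ∧
    ∀ t : ℝ, 0 < t → Tendsto (fun x : ℝ => f (t * x) / f x) atTop (nhds (t ^ ρ))

variable {Ω : Type*} [MeasurableSpace Ω]

/-- The (possibly infinite) moment `E[Θ^r]`. -/
def momE (P : Measure Ω) (Θ : Ω → ℝ) (r : ℝ) : ℝ≥0∞ :=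
  ∫⁻ ω, ENNReal.ofReal (Θ ω ^ r) ∂P

/-- The RW moment conditions for the sequence `{Θ_t}` and the index `α`:
if `0 < α < 1`, then `Σ_t E[Θ_t^{α+ε} + Θ_t^{α-ε}] < ∞` for some `ε ∈ (0,α)`;
if `α ≥ 1`, then `Σ_t (E[Θ_t^{α+ε} + Θ_t^{α-ε}])^{1/(α+ε)} < ∞` for some `ε ∈ (0,α)`. -/
def RWConditions (P : Measure Ω) (Θ : ℕ → Ω → ℝ) (α : ℝ) : Prop :=
  ∃ ε : ℝ, 0 < ε ∧ ε < α ∧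
    ((α < 1 ∧ (∑' t : ℕ, (momE P (Θ t) (α + ε) + momE P (Θ t) (α - ε))) ≠ ⊤) ∨
      (1 ≤ α ∧
        (∑' t : ℕ, (momE P (Θ t) (α + ε) + momE P (Θ t) (α - ε)) ^ (1 / (α + ε))) ≠ ⊤))

/-- The tail `P[Z > x]` of a random variable, as a real number. -/
def tailP (P : Measure Ω) (Z : Ω → ℝ) (x : ℝ) : ℝ := (P {ω | x < Z ω}).toReal

/-- `X` and `Y` are asymptotically independent:
`P[X > x, Y > x] / P[X > x] → 0` and `P[X > x, Y > x] / P[Y > x] → 0` as `x → ∞`. -/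
def AsympIndep (P : Measure Ω) (X Y : Ω → ℝ) : Prop :=
  Tendsto (fun x : ℝ =>
      (P {ω | x < X ω ∧ x < Y ω}).toReal / (P {ω | x < X ω}).toReal) atTop (nhds 0) ∧
    Tendsto (fun x : ℝ =>
      (P {ω | x < X ω ∧ x < Y ω}).toReal / (P {ω | x < Y ω}).toReal) atTop (nhds 0)

lemma le_mul_of_dyadic {f : ℝ → ℝ} {C x₀ : ℝ} (hx₀ : 0 < x₀)
    (h1 : ∀ x, x₀ ≤ x → f (2 * x) ≤ f x)
    (h2 : ∀ x y, x₀ ≤ x → x ≤ y → y ≤ 2 * x → f y ≤ C * f x) :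
    ∀ x y, x₀ ≤ x → x ≤ y → f y ≤ C * f x := by
  intro x y hx hxy
  have key : ∀ n : ℕ, ∀ y, x ≤ y → y ≤ 2 ^ n * x → f y ≤ C * f x := by
    intro n
    induction n with
    | zero =>
      intro y h h'
      exact h2 x y hx h (by simp at h'; linarith)
    | succ n ih =>
      intro y h h'
      rcases le_total y (2 * x) with h3 | h3
      · exact h2 x y hx h h3
      · have h4 := ih (y / 2) (by linarith) (by rw [pow_succ] at h'; linarith)
        have h5 := h1 (y / 2) (by linarith)
        rw [mul_div_cancel₀ y two_ne_zero] at h5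
        exact h5.trans h4
  have hx' : 0 < x := hx₀.trans_le hx
  obtain ⟨n, hn⟩ := pow_unbounded_of_one_lt (y / x) one_lt_two
  exact key n y hxy ((div_le_iff₀ hx').1 hn.le)

/-- Potter-type bounds along a decreasing regularly varying function. -/
lemma RegVarying.exists_potter {h : ℝ → ℝ} {α p q : ℝ}
    (hanti : ∀ x y, 0 < x → x ≤ y → h y ≤ h x) (hRV : RegVarying h (-α))
    (hq : 0 ≤ q) (hqα : q < α) (hαp : α < p) :
    ∃ x₀ > 0, ∃ r > 1, (∀ x, x₀ ≤ x → r * h x ≤ 2 ^ p * h (2 * x)) ∧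
      (∀ x y, x₀ ≤ x → x ≤ y → y ^ q * h y ≤ 2 ^ q * (x ^ q * h x)) ∧
      (∀ x y, x₀ ≤ x → x ≤ y → x ^ p * h x ≤ 2 ^ p * (y ^ p * h y)) := by
  obtain ⟨hpos, hlim⟩ := hRV
  have h2 := hlim 2 two_pos
  set s := (α + p) / 2 with hs
  have e1 : ∀ᶠ x in atTop, h (2 * x) / h x < 2 ^ (-q) :=
    h2.eventually_lt_const (Real.rpow_lt_rpow_of_exponent_lt one_lt_two (by linarith))
  have e2 : ∀ᶠ x in atTop, 2 ^ (-s) < h (2 * x) / h x :=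
    h2.eventually_const_lt (Real.rpow_lt_rpow_of_exponent_lt one_lt_two (by linarith))
  obtain ⟨x₀, hx₀⟩ := ((e1.and e2).and (eventually_gt_atTop 0)).exists_forall_of_atTop
  have hx0 : 0 < x₀ := (hx₀ x₀ le_rfl).2
  have hr : (1 : ℝ) < 2 ^ (p - s) := Real.one_lt_rpow one_lt_two (by linarith)
  have k1 : ∀ x, x₀ ≤ x → 2 ^ (p - s) * h x ≤ 2 ^ p * h (2 * x) := by
    intro x hx
    have := (hx₀ x hx).1.2
    rw [lt_div_iff₀ (hpos x (hx0.trans_le hx))] at this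
    calc (2 : ℝ) ^ (p - s) * h x = 2 ^ p * (2 ^ (-s) * h x) := by
          rw [sub_eq_add_neg, Real.rpow_add two_pos, mul_assoc]
      _ ≤ _ := by gcongr
  have k2 : ∀ x, x₀ ≤ x → h x ≤ 2 ^ p * h (2 * x) := by
    intro x hx
    refine le_trans ?_ (k1 x hx)
    nlinarith [hpos x (hx0.trans_le hx)]
  have k3 : ∀ x, x₀ ≤ x → 2 ^ q * h (2 * x) ≤ h x := by
    intro x hx
    have := (hx₀ x hx).1.1
    rw [div_lt_iff₀ (hpos x (hx0.trans_le hx))] at this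
    calc (2 : ℝ) ^ q * h (2 * x) ≤ 2 ^ q * (2 ^ (-q) * h x) := by gcongr
      _ = h x := by rw [← mul_assoc, ← Real.rpow_add two_pos]; simp
  refine ⟨x₀, hx0, _, hr, k1, ?_, ?_⟩
  · refine le_mul_of_dyadic hx0 ?_ ?_
    · intro x hx
      have hx' : 0 < x := hx0.trans_le hx
      rw [Real.mul_rpow two_pos.le hx'.le]
      have := mul_le_mul_of_nonneg_left (k3 x hx) (Real.rpow_nonneg hx'.le q)
      linarith
    · intro x y hx hxy hy
      have hx' : 0 < x := hx0.trans_le hx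
      rw [← mul_assoc, ← Real.mul_rpow two_pos.le hx'.le]
      exact mul_le_mul (Real.rpow_le_rpow (by linarith) hy hq) (hanti x y hx' hxy)
        (hpos y (by linarith)).le (Real.rpow_nonneg (by linarith) _)
  · have hp : 0 ≤ p := by linarith
    have hP : ∀ x, x₀ ≤ x → 0 < x ^ p * h x := fun x hx =>
      mul_pos (Real.rpow_pos_of_pos (hx0.trans_le hx) _) (hpos x (hx0.trans_le hx))
    have key := le_mul_of_dyadic (f := fun x => (x ^ p * h x)⁻¹) (C := 2 ^ p) hx0 ?_ ?_
    · intro x y hx hxy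
      have := key x y hx hxy
      rw [← div_eq_mul_inv, le_div_iff₀ (hP x hx), inv_mul_le_iff₀ (hP y (hx.trans hxy))] at this
      linarith
    · intro x hx
      have hx' : 0 < x := hx0.trans_le hx
      refine inv_anti₀ (hP x hx) ?_
      rw [Real.mul_rpow two_pos.le hx'.le]
      have := mul_le_mul_of_nonneg_left (k2 x hx) (Real.rpow_nonneg hx'.le p)
      linarith
    · intro x y hx hxy hy
      have hx' : 0 < x := hx0.trans_le hx
      have hy' : 0 < y := by linarith
      rw [← div_eq_mul_inv, le_div_iff₀ (hP x hx), inv_mul_le_iff₀ (hP y (hx.trans hxy))]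
      have a1 : h x ≤ 2 ^ p * h y :=
        (k2 x hx).trans (by gcongr; exact hanti _ _ hy' hy)
      calc x ^ p * h x ≤ y ^ p * (2 ^ p * h y) :=
            mul_le_mul (Real.rpow_le_rpow hx'.le hxy hp) a1 (hpos x hx').le
              (Real.rpow_nonneg hy'.le _)
        _ = _ := by ring

/-- Karamata-type bound for truncated moments. -/
lemma exists_truncatedMoment_le {P : Measure Ω} [IsProbabilityMeasure P] {Y : Ω → ℝ≥0∞}
    (hY : Measurable Y) {h : ℝ → ℝ} {p x₀ r A : ℝ} (hp : 0 < p) (hx₀ : 0 < x₀) (hr : 1 < r)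
    (hA : 0 ≤ A) (hpos : ∀ x, 0 < x → 0 < h x) (hanti : ∀ x y, 0 < x → x ≤ y → h y ≤ h x)
    (hdbl : ∀ x, x₀ ≤ x → r * h x ≤ 2 ^ p * h (2 * x))
    (htail : ∀ x, x₀ ≤ x → P {ω | ENNReal.ofReal x < Y ω} ≤ ENNReal.ofReal (A * h x)) :
    ∃ B > 0, ∀ z, x₀ ≤ z →
      ∫⁻ ω, (min (Y ω) (ENNReal.ofReal z)) ^ p ∂P ≤ ENNReal.ofReal (B * (z ^ p * h z)) := by
  set B := (h (2 * x₀))⁻¹ + 2 ^ p * A / (r - 1) with hB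
  have hr' : 0 < r - 1 := by linarith
  have h2x : 0 < h (2 * x₀) := hpos _ (by linarith)
  have hBpos : 0 < B := by positivity
  have hB1 : (h (2 * x₀))⁻¹ ≤ B := by rw [hB]; linarith [show 0 ≤ 2 ^ p * A / (r - 1) by positivity]
  have hB2 : B + 2 ^ p * A ≤ B * r := by
    have : 2 ^ p * A / (r - 1) ≤ B := by rw [hB]; linarith [inv_pos.2 h2x]
    rw [div_le_iff₀ hr'] at this
    linarith
  have base : ∀ z, x₀ ≤ z → z ≤ 2 * x₀ →
      ∫⁻ ω, (min (Y ω) (ENNReal.ofReal z)) ^ p ∂P ≤ ENNReal.ofReal (B * (z ^ p * h z)) := by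
    intro z hz hz'
    have hzp : 0 < z := hx₀.trans_le hz
    calc ∫⁻ ω, (min (Y ω) (ENNReal.ofReal z)) ^ p ∂P
        ≤ ∫⁻ _, (ENNReal.ofReal z) ^ p ∂P := by
          gcongr with ω
          exact min_le_right _ _
      _ = ENNReal.ofReal (z ^ p) := by
          rw [lintegral_const, measure_univ, mul_one, ENNReal.ofReal_rpow_of_pos hzp]
      _ ≤ _ := by
          apply ENNReal.ofReal_le_ofReal
          have : 1 ≤ B * h z := by
            calc 1 = (h (2 * x₀))⁻¹ * h (2 * x₀) := (inv_mul_cancel₀ h2x.ne').symm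
              _ ≤ B * h z := mul_le_mul hB1 (hanti _ _ hzp hz') h2x.le hBpos.le
          nlinarith [Real.rpow_pos_of_pos hzp p]
  refine ⟨B, hBpos, fun z hz => ?_⟩
  have key : ∀ n : ℕ, ∀ z, x₀ ≤ z → z ≤ 2 ^ n * x₀ →
      ∫⁻ ω, (min (Y ω) (ENNReal.ofReal z)) ^ p ∂P ≤ ENNReal.ofReal (B * (z ^ p * h z)) := by
    intro n
    induction n with
    | zero => exact fun z hz hz' => base z hz (by simp at hz'; linarith)
    | succ n ih =>
      intro z hz hz'
      rcases le_total z (2 * x₀) with h3 | h3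
      · exact base z hz h3
      obtain ⟨y, rfl⟩ : ∃ y, z = 2 * y := ⟨z / 2, by ring⟩
      have hy : x₀ ≤ y := by linarith
      have hyp : 0 < y := hx₀.trans_le hy
      have hm : MeasurableSet {ω | ENNReal.ofReal y < Y ω} := measurableSet_lt measurable_const hY
      calc ∫⁻ ω, (min (Y ω) (ENNReal.ofReal (2 * y))) ^ p ∂P
          ≤ ∫⁻ ω, ((min (Y ω) (ENNReal.ofReal y)) ^ p +
              {ω | ENNReal.ofReal y < Y ω}.indicator
                (fun _ => ENNReal.ofReal ((2 * y) ^ p)) ω) ∂P := by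
            gcongr with ω
            rw [Set.indicator_apply]
            split_ifs with hω
            · rw [← ENNReal.ofReal_rpow_of_pos (by linarith)]
              exact le_add_left (ENNReal.rpow_le_rpow (min_le_right _ _) hp.le)
            · rw [Set.mem_ofPred_eq, not_lt] at hω
              rw [min_eq_left hω, add_zero]
              exact ENNReal.rpow_le_rpow (min_le_left _ _) hp.le
        _ = ∫⁻ ω, (min (Y ω) (ENNReal.ofReal y)) ^ p ∂P +
              ENNReal.ofReal ((2 * y) ^ p) * P {ω | ENNReal.ofReal y < Y ω} := by
            rw [lintegral_add_right _ (measurable_const.indicator hm), lintegral_indicator_const hm]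
        _ ≤ ENNReal.ofReal (B * (y ^ p * h y)) +
              ENNReal.ofReal ((2 * y) ^ p) * ENNReal.ofReal (A * h y) := by
            gcongr
            · exact ih y hy (by rw [pow_succ] at hz'; linarith)
            · exact htail y hy
        _ = ENNReal.ofReal (y ^ p * h y * (B + 2 ^ p * A)) := by
            have := hpos y hyp
            rw [← ENNReal.ofReal_mul (by positivity), ← ENNReal.ofReal_add (by positivity)
              (by positivity), Real.mul_rpow two_pos.le hyp.le]
            congr 1
            ring
        _ ≤ _ := by
            apply ENNReal.ofReal_le_ofReal
            have := hpos y hyp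
            calc y ^ p * h y * (B + 2 ^ p * A) ≤ y ^ p * h y * (B * r) := by gcongr
              _ = B * (y ^ p * (r * h y)) := by ring
              _ ≤ B * (y ^ p * (2 ^ p * h (2 * y))) := by
                  have := hdbl y hy
                  gcongr B * (y ^ p * ?_)
              _ = _ := by rw [Real.mul_rpow two_pos.le hyp.le]; ring
  obtain ⟨n, hn⟩ := pow_unbounded_of_one_lt (z / x₀) one_lt_two
  exact key n z hz ((div_le_iff₀ hx₀).1 hn.le)

lemma exists_scaledTruncatedMoment_le {P : Measure Ω} [IsProbabilityMeasure P] {Y : Ω → ℝ≥0∞}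
    (hY : Measurable Y) {h : ℝ → ℝ} {α p q a c : ℝ} (hq : 0 < q) (hqα : q < α) (hαp : α < p)
    (hanti : ∀ x y, 0 < x → x ≤ y → h y ≤ h x) (hRV : RegVarying h (-α))
    (ha : 0 < a) (hc : 0 ≤ c)
    (htail : ∀ x, 0 < x → P {ω | ENNReal.ofReal x < Y ω} ≤ ENNReal.ofReal (c * h (a * x))) :
    ∃ C > 0, ∃ x₁ > 0, ∀ x, x₁ ≤ x → ∀ θ, 0 < θ →
      ∫⁻ ω, (min (ENNReal.ofReal θ * Y ω) (ENNReal.ofReal x)) ^ p ∂P ≤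
        ENNReal.ofReal (C * (x ^ p * h x)) * (ENNReal.ofReal (θ ^ p) + ENNReal.ofReal (θ ^ q)) := by
  have hp : 0 < p := by linarith
  have hpos := hRV.1
  obtain ⟨w, hw0, r, hr, hdbl, hP1, hP2⟩ := hRV.exists_potter hanti hq.le hqα hαp
  obtain ⟨v, hv⟩ := ((hRV.2 a ha).eventually_lt_const
    (lt_add_one (a ^ (-α)))).exists_forall_of_atTop
  set x₀ := max w v with hx₀
  have hx0 : 0 < x₀ := lt_max_of_lt_left hw0
  have hwx : w ≤ x₀ := le_max_left _ _
  have hA0 : 0 ≤ c * (a ^ (-α) + 1) := by positivity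
  obtain ⟨B, hB, hmom⟩ := exists_truncatedMoment_le hY hp hx0 hr hA0 hpos hanti
    (fun x hx => hdbl x (hwx.trans hx)) (fun x hx => by
      have hxp := hx0.trans_le hx
      refine (htail x hxp).trans (ENNReal.ofReal_le_ofReal ?_)
      rw [mul_assoc]
      refine mul_le_mul_of_nonneg_left ?_ hc
      exact ((div_lt_iff₀ (hpos x hxp)).1 (hv x ((le_max_right _ _).trans hx))).le)
  have hh0 := hpos x₀ hx0
  set D := x₀ ^ p * 2 ^ p / (x₀ ^ p * h x₀) with hD
  set C := B * (2 ^ p + 2 ^ q) + D with hC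
  have hDpos : 0 < D := by positivity
  refine ⟨C, by positivity, x₀, hx0, fun x hx θ hθ => ?_⟩
  have hxp : 0 < x := hx0.trans_le hx
  have hhx := hpos x hxp
  have hθp := Real.rpow_pos_of_pos hθ p
  have hθq := Real.rpow_pos_of_pos hθ q
  have hxpp := Real.rpow_pos_of_pos hxp p
  have hxpq := Real.rpow_pos_of_pos hxp q
  rw [← ENNReal.ofReal_add hθp.le hθq.le, ← ENNReal.ofReal_mul (by positivity)]
  rcases le_total x₀ (x / θ) with hz | hz
  · set z := x / θ with hz'
    have hzp : 0 < z := hx0.trans_le hz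
    have hxz : x = θ * z := by rw [hz']; field_simp
    calc ∫⁻ ω, (min (ENNReal.ofReal θ * Y ω) (ENNReal.ofReal x)) ^ p ∂P
        = ∫⁻ ω, ENNReal.ofReal (θ ^ p) * (min (Y ω) (ENNReal.ofReal z)) ^ p ∂P := by
          congr 1 with ω
          rw [hxz, ENNReal.ofReal_mul hθ.le, ← ENNReal.ofReal_rpow_of_pos hθ,
            ← ENNReal.mul_rpow_of_nonneg _ _ hp.le]
          congr 1
          exact ((mul_right_mono (α := ℝ≥0∞)).map_min).symm
      _ = ENNReal.ofReal (θ ^ p) * ∫⁻ ω, (min (Y ω) (ENNReal.ofReal z)) ^ p ∂P :=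
          lintegral_const_mul' _ _ ENNReal.ofReal_ne_top
      _ ≤ ENNReal.ofReal (θ ^ p) * ENNReal.ofReal (B * (z ^ p * h z)) := by
          gcongr
          exact hmom z hz
      _ = ENNReal.ofReal (B * (x ^ p * h z)) := by
          rw [← ENNReal.ofReal_mul hθp.le, hxz, Real.mul_rpow hθ.le hzp.le]
          congr 1
          ring
      _ ≤ _ := by
          apply ENNReal.ofReal_le_ofReal
          have hhz : h z ≤ h x * ((2 ^ p + 2 ^ q) * (θ ^ p + θ ^ q)) := by
            have hzpp := Real.rpow_pos_of_pos hzp p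
            have hzpq := Real.rpow_pos_of_pos hzp q
            have t1 : 0 < (2 : ℝ) ^ p := by positivity
            have t2 : 0 < (2 : ℝ) ^ q := by positivity
            have e1 : h x * 2 ^ p * θ ^ p ≤ h x * ((2 ^ p + 2 ^ q) * (θ ^ p + θ ^ q)) := by
              rw [mul_assoc]
              gcongr
              · linarith
              · linarith
            have e2 : h x * 2 ^ q * θ ^ q ≤ h x * ((2 ^ p + 2 ^ q) * (θ ^ p + θ ^ q)) := by
              rw [mul_assoc]
              gcongr
              · linarith
              · linarith
            rcases le_total z x with hzx | hzx
            · refine le_trans ?_ e1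
              have := hP2 z x (hwx.trans hz) hzx
              rw [show x ^ p = θ ^ p * z ^ p by rw [← Real.mul_rpow hθ.le hzp.le, ← hxz]] at this
              refine le_of_mul_le_mul_left ?_ hzpp
              linarith
            · refine le_trans ?_ e2
              have := hP1 x z (hwx.trans hx) hzx
              rw [show x ^ q = θ ^ q * z ^ q by rw [← Real.mul_rpow hθ.le hzp.le, ← hxz]] at this
              refine le_of_mul_le_mul_left ?_ hzpq
              linarith
          calc B * (x ^ p * h z)
              ≤ B * (x ^ p * (h x * ((2 ^ p + 2 ^ q) * (θ ^ p + θ ^ q)))) := by gcongr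
            _ = B * (2 ^ p + 2 ^ q) * (x ^ p * h x) * (θ ^ p + θ ^ q) := by ring
            _ ≤ _ := by rw [hC]; gcongr; linarith
  · have hxθ : x ≤ x₀ * θ := (div_le_iff₀ hθ).1 hz
    calc ∫⁻ ω, (min (ENNReal.ofReal θ * Y ω) (ENNReal.ofReal x)) ^ p ∂P
        ≤ ∫⁻ _, (ENNReal.ofReal x) ^ p ∂P := by
          gcongr with ω
          exact min_le_right _ _
      _ = ENNReal.ofReal (x ^ p) := by
          rw [lintegral_const, measure_univ, mul_one, ENNReal.ofReal_rpow_of_pos hxp]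
      _ ≤ _ := by
          apply ENNReal.ofReal_le_ofReal
          have s1 : x ^ p ≤ x₀ ^ p * θ ^ p := by
            rw [← Real.mul_rpow hx0.le hθ.le]
            exact Real.rpow_le_rpow hxp.le hxθ hp.le
          have s2 : x₀ ^ p ≤ D * (x ^ p * h x) := by
            have := hP2 x₀ x hwx hx
            rw [hD, div_mul_eq_mul_div, le_div_iff₀ (by positivity), mul_assoc]
            gcongr
          calc x ^ p ≤ x₀ ^ p * θ ^ p := s1
            _ ≤ D * (x ^ p * h x) * (θ ^ p + θ ^ q) := by
              gcongr
              linarith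
            _ ≤ _ := by
              gcongr
              rw [hC]
              linarith [show 0 < B * (2 ^ p + 2 ^ q) by positivity]

lemma lintegral_comp_indepFun {E F : Type*} [MeasurableSpace E] [MeasurableSpace F]
    {P : Measure Ω} [IsProbabilityMeasure P] {U : Ω → E} {V : Ω → F} (hU : Measurable U)
    (hV : Measurable V) (hUV : IndepFun U V P) {f : E → F → ℝ≥0∞}
    (hf : Measurable (Function.uncurry f)) :
    ∫⁻ ω, f (U ω) (V ω) ∂P = ∫⁻ ω, ∫⁻ ω', f (U ω) (V ω') ∂P ∂P := by
  have e := (indepFun_iff_map_prod_eq_prod_map_map hU.aemeasurable hV.aemeasurable).1 hUV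
  have : IsProbabilityMeasure (P.map U) := Measure.isProbabilityMeasure_map hU.aemeasurable
  have : IsProbabilityMeasure (P.map V) := Measure.isProbabilityMeasure_map hV.aemeasurable
  calc ∫⁻ ω, f (U ω) (V ω) ∂P = ∫⁻ z, Function.uncurry f z ∂(P.map fun ω => (U ω, V ω)) :=
        (lintegral_map hf (hU.prodMk hV)).symm
    _ = ∫⁻ u, ∫⁻ v, f u v ∂(P.map V) ∂(P.map U) := by
        rw [e, lintegral_prod _ hf.aemeasurable]
        rfl
    _ = ∫⁻ ω, ∫⁻ v, f (U ω) v ∂(P.map V) ∂P := lintegral_map hf.lintegral_prod_right' hU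
    _ = _ := by
        congr 1 with ω
        exact lintegral_map (hf.comp measurable_prodMk_left) hV

lemma ENNReal.rpow_tsum_le_tsum_rpow {ι : Type*} {p : ℝ} (hp : 0 < p) (hp1 : p ≤ 1)
    (f : ι → ℝ≥0∞) : (∑' i, f i) ^ p ≤ ∑' i, f i ^ p := by
  have h1 : Tendsto (fun s : Finset ι => (∑ i ∈ s, f i) ^ p) atTop (𝓝 ((∑' i, f i) ^ p)) :=
    ((ENNReal.continuous_rpow_const (y := p)).tendsto _).comp ENNReal.summable.hasSum
  refine le_of_tendsto' h1 fun s => ?_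
  refine le_trans ?_ (ENNReal.sum_le_tsum s)
  exact Finset.le_sum_of_subadditive (fun x : ℝ≥0∞ => x ^ p) (ENNReal.zero_rpow_of_pos hp).le
    (fun a b => ENNReal.rpow_add_le_add_rpow a b hp.le hp1) s f

/-- Minkowski's inequality for countable sums. -/
lemma lintegral_tsum_rpow_le {P : Measure Ω} {p : ℝ} (hp : 1 ≤ p) {Z : ℕ → Ω → ℝ≥0∞}
    (hZ : ∀ t, Measurable (Z t)) :
    (∫⁻ ω, (∑' t, Z t ω) ^ p ∂P) ^ (1 / p) ≤ ∑' t, (∫⁻ ω, Z t ω ^ p ∂P) ^ (1 / p) := by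
  have hp0 : 0 < p := by linarith
  have hfin : ∀ n : ℕ, (∫⁻ ω, (∑ t ∈ Finset.range n, Z t ω) ^ p ∂P) ^ (1 / p) ≤
      ∑ t ∈ Finset.range n, (∫⁻ ω, Z t ω ^ p ∂P) ^ (1 / p) := by
    intro n
    induction n with
    | zero => simp [hp0]
    | succ n ih =>
      rw [Finset.sum_range_succ]
      simp_rw [Finset.sum_range_succ]
      refine le_trans ?_ (add_le_add_left ih _)
      exact ENNReal.lintegral_Lp_add_le (f := fun ω => ∑ t ∈ Finset.range n, Z t ω)
        (by fun_prop) (hZ n).aemeasurable hp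
  have hlim : Tendsto (fun n : ℕ => ∫⁻ ω, (∑ t ∈ Finset.range n, Z t ω) ^ p ∂P) atTop
      (𝓝 (∫⁻ ω, (∑' t, Z t ω) ^ p ∂P)) := by
    refine lintegral_tendsto_of_tendsto_of_monotone (fun n => by fun_prop) ?_ ?_
    · refine Eventually.of_forall fun ω m n hmn => ?_
      exact ENNReal.rpow_le_rpow
        (Finset.sum_le_sum_of_subset (Finset.range_mono hmn)) hp0.le
    · refine Eventually.of_forall fun ω => ?_
      exact ((ENNReal.continuous_rpow_const (y := p)).tendsto _).comp
        (ENNReal.tendsto_nat_tsum fun t => Z t ω)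
  refine le_of_tendsto' (((ENNReal.continuous_rpow_const (y := 1 / p)).tendsto _).comp hlim) ?_
  exact fun n => (hfin n).trans (ENNReal.sum_le_tsum _)

lemma momE_le_add {P : Measure Ω} {Θ : Ω → ℝ} (hΘ : Measurable Θ) (hpos : ∀ᵐ ω ∂P, 0 < Θ ω)
    {a b r : ℝ} (har : a ≤ r) (hrb : r ≤ b) : momE P Θ r ≤ momE P Θ b + momE P Θ a := by
  unfold momE
  rw [← lintegral_add_left (by fun_prop)]
  refine lintegral_mono_ae ?_
  filter_upwards [hpos] with ω hω
  rcases le_total (Θ ω) 1 with h | h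
  · exact le_add_left (ENNReal.ofReal_le_ofReal (Real.rpow_le_rpow_of_exponent_ge hω h har))
  · exact le_add_right (ENNReal.ofReal_le_ofReal (Real.rpow_le_rpow_of_exponent_le h hrb))

lemma RWConditions.exists_moment_bound {P : Measure Ω} {Θ : ℕ → Ω → ℝ} {α : ℝ}
    (hΘmeas : ∀ t, Measurable (Θ t)) (hΘpos : ∀ t, ∀ᵐ ω ∂P, 0 < Θ t ω)
    (hRW : RWConditions P Θ α) :
    ∃ p q : ℝ, 0 < q ∧ q < α ∧ α < p ∧ (∑' t, (momE P (Θ t) p + momE P (Θ t) q)) ≠ ⊤ ∧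
      ∃ S : ℕ → ℝ≥0∞, Tendsto S atTop (𝓝 0) ∧
        ∀ (n : ℕ) (K : ℝ≥0∞) (Z : ℕ → Ω → ℝ≥0∞), (∀ t, Measurable (Z t)) →
          (∀ t, ∫⁻ ω, Z t ω ^ p ∂P ≤ K * (momE P (Θ t) p + momE P (Θ t) q)) →
          ∫⁻ ω, (∑' t, Z (t + n) ω) ^ p ∂P ≤ K * S n := by
  obtain ⟨ε, hε, hεα, ⟨hα1, hsum⟩ | ⟨hα1, hsum⟩⟩ := hRW
  · set δ := min ε (1 - α) with hδ
    have hδ0 : 0 < δ := lt_min hε (by linarith)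
    have hδε : δ ≤ ε := min_le_left _ _
    have hδα : δ ≤ 1 - α := min_le_right _ _
    have hfin : (∑' t, (momE P (Θ t) (α + δ) + momE P (Θ t) (α - δ))) ≠ ⊤ := by
      refine ne_top_of_le_ne_top (ENNReal.mul_ne_top (ENNReal.ofNat_ne_top (n := 2)) hsum) ?_
      rw [← ENNReal.tsum_mul_left]
      refine ENNReal.tsum_le_tsum fun t => ?_
      rw [two_mul]
      exact add_le_add (momE_le_add (hΘmeas t) (hΘpos t) (by linarith) (by linarith))
        (momE_le_add (hΘmeas t) (hΘpos t) (by linarith) (by linarith))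
    refine ⟨α + δ, α - δ, by linarith, by linarith, by linarith, hfin,
      fun n => ∑' t, (momE P (Θ (t + n)) (α + δ) + momE P (Θ (t + n)) (α - δ)),
      ENNReal.tendsto_sum_nat_add _ hfin, fun n K Z hZ hle => ?_⟩
    calc ∫⁻ ω, (∑' t, Z (t + n) ω) ^ (α + δ) ∂P
        ≤ ∫⁻ ω, ∑' t, Z (t + n) ω ^ (α + δ) ∂P := by
          gcongr with ω
          exact ENNReal.rpow_tsum_le_tsum_rpow (by linarith) (by linarith) _
      _ = ∑' t, ∫⁻ ω, Z (t + n) ω ^ (α + δ) ∂P :=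
          lintegral_tsum fun t => by have := hZ (t + n); fun_prop
      _ ≤ _ := by
          rw [← ENNReal.tsum_mul_left]
          exact ENNReal.tsum_le_tsum fun t => hle (t + n)
  · have hp0 : 0 < α + ε := by linarith
    have hp1 : 1 ≤ α + ε := by linarith
    refine ⟨α + ε, α - ε, by linarith, by linarith, by linarith, fun htop => ?_,
      fun n => (∑' t, (momE P (Θ (t + n)) (α + ε) + momE P (Θ (t + n)) (α - ε)) ^
        (1 / (α + ε))) ^ (α + ε), ?_, fun n K Z hZ hle => ?_⟩
    · have := ENNReal.rpow_tsum_le_tsum_rpow (p := 1 / (α + ε)) (by positivity)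
        ((div_le_one hp0).2 hp1) (fun t => momE P (Θ t) (α + ε) + momE P (Θ t) (α - ε))
      rw [htop, ENNReal.top_rpow_of_pos (by positivity), top_le_iff] at this
      exact hsum this
    · have := ((ENNReal.continuous_rpow_const (y := α + ε)).tendsto _).comp
        (ENNReal.tendsto_sum_nat_add _ hsum)
      rwa [ENNReal.zero_rpow_of_pos hp0] at this
    · have h1 := lintegral_tsum_rpow_le (P := P) hp1 (fun t => hZ (t + n))
      have h2 : ∑' t, (∫⁻ ω, Z (t + n) ω ^ (α + ε) ∂P) ^ (1 / (α + ε)) ≤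
          K ^ (1 / (α + ε)) * ∑' t, (momE P (Θ (t + n)) (α + ε) + momE P (Θ (t + n)) (α - ε)) ^
            (1 / (α + ε)) := by
        rw [← ENNReal.tsum_mul_left]
        refine ENNReal.tsum_le_tsum fun t => ?_
        rw [← ENNReal.mul_rpow_of_nonneg _ _ (by positivity)]
        exact ENNReal.rpow_le_rpow (hle (t + n)) (by positivity)
      have h3 := ENNReal.rpow_le_rpow (h1.trans h2) hp0.le
      rw [ENNReal.mul_rpow_of_nonneg _ _ hp0.le, ← ENNReal.rpow_mul, ← ENNReal.rpow_mul,
        one_div_mul_cancel hp0.ne', ENNReal.rpow_one, ENNReal.rpow_one] at h3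
      exact h3

lemma measure_le_of_lintegral_rpow_le {P : Measure Ω} {g : Ω → ℝ≥0∞} (hg : Measurable g)
    {p C δ x H : ℝ} {w : ℝ≥0∞} (hp : 0 < p) (hδ : 0 < δ) (hx : 0 < x)
    (hle : ∫⁻ ω, g ω ^ p ∂P ≤ ENNReal.ofReal (C * (x ^ p * H)) * w) :
    P {ω | ENNReal.ofReal (δ * x) ≤ g ω} ≤ ENNReal.ofReal (C / δ ^ p * H) * w := by
  have hδx : 0 < (δ * x) ^ p := Real.rpow_pos_of_pos (mul_pos hδ hx) p
  have hδp : 0 < δ ^ p := Real.rpow_pos_of_pos hδ p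
  have hne : ENNReal.ofReal ((δ * x) ^ p) ≠ 0 := by simpa using hδx
  refine (ENNReal.mul_le_mul_iff_right hne ENNReal.ofReal_ne_top).1 ?_
  rw [← mul_assoc, ← ENNReal.ofReal_mul hδx.le,
    show (δ * x) ^ p * (C / δ ^ p * H) = C * (x ^ p * H) by
      rw [Real.mul_rpow hδ.le hx.le]; field_simp]
  refine le_trans ?_ hle
  refine le_trans ?_ (mul_meas_ge_le_lintegral₀ (by fun_prop) (ENNReal.ofReal ((δ * x) ^ p)))
  refine mul_le_mul_right (measure_mono fun ω hω => ?_) _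
  have hω' : ENNReal.ofReal (δ * x) ≤ g ω := hω
  show ENNReal.ofReal ((δ * x) ^ p) ≤ g ω ^ p
  rw [← ENNReal.ofReal_rpow_of_pos (mul_pos hδ hx)]
  exact ENNReal.rpow_le_rpow hω' hp.le

lemma measure_div_lt_le {P : Measure Ω} {X : Ω → ℝ} (hX : Measurable X) {p C x θ H : ℝ}
    {w : ℝ≥0∞} (hp : 0 < p) (hx : 0 < x) (hθ : 0 < θ)
    (hle : ∫⁻ ω, (min (ENNReal.ofReal θ * ENNReal.ofReal (X ω)) (ENNReal.ofReal x)) ^ p ∂P ≤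
      ENNReal.ofReal (C * (x ^ p * H)) * w) :
    P {ω | x / θ < X ω} ≤ ENNReal.ofReal (C * H) * w := by
  have h1 := measure_le_of_lintegral_rpow_le
    (g := fun ω => min (ENNReal.ofReal θ * ENNReal.ofReal (X ω)) (ENNReal.ofReal x))
    (by fun_prop) hp one_pos hx hle
  rw [Real.one_rpow, div_one, one_mul] at h1
  refine (measure_mono fun ω hω => ?_).trans h1
  have hω' : x / θ < X ω := hω
  rw [div_lt_iff₀ hθ] at hω'
  show ENNReal.ofReal x ≤ min (ENNReal.ofReal θ * ENNReal.ofReal (X ω)) (ENNReal.ofReal x)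
  refine le_min ?_ le_rfl
  rw [← ENNReal.ofReal_mul hθ.le]
  exact ENNReal.ofReal_le_ofReal (by linarith)

lemma lintegral_min_mul_rpow_le {P : Measure Ω} [IsProbabilityMeasure P] {X Θ : Ω → ℝ}
    (hX : Measurable X) (hΘ : Measurable Θ) (hΘpos : ∀ᵐ ω ∂P, 0 < Θ ω) (hind : IndepFun Θ X P)
    {p q x : ℝ} {K : ℝ≥0∞}
    (hle : ∀ θ, 0 < θ →
      ∫⁻ ω, (min (ENNReal.ofReal θ * ENNReal.ofReal (X ω)) (ENNReal.ofReal x)) ^ p ∂P ≤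
        K * (ENNReal.ofReal (θ ^ p) + ENNReal.ofReal (θ ^ q))) :
    ∫⁻ ω, (min (ENNReal.ofReal (Θ ω * X ω)) (ENNReal.ofReal x)) ^ p ∂P ≤
      K * (momE P Θ p + momE P Θ q) := by
  calc ∫⁻ ω, (min (ENNReal.ofReal (Θ ω * X ω)) (ENNReal.ofReal x)) ^ p ∂P
      = ∫⁻ ω, (min (ENNReal.ofReal (Θ ω) * ENNReal.ofReal (X ω)) (ENNReal.ofReal x)) ^ p ∂P := by
        refine lintegral_congr_ae ?_
        filter_upwards [hΘpos] with ω hω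
        rw [ENNReal.ofReal_mul hω.le]
    _ = ∫⁻ ω, ∫⁻ ω', (min (ENNReal.ofReal (Θ ω) * ENNReal.ofReal (X ω'))
          (ENNReal.ofReal x)) ^ p ∂P ∂P :=
        lintegral_comp_indepFun hΘ hX hind
          (f := fun θ y => (min (ENNReal.ofReal θ * ENNReal.ofReal y) (ENNReal.ofReal x)) ^ p)
          (by unfold Function.uncurry; fun_prop)
    _ ≤ ∫⁻ ω, K * (ENNReal.ofReal (Θ ω ^ p) + ENNReal.ofReal (Θ ω ^ q)) ∂P := by
        refine lintegral_mono_ae ?_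
        filter_upwards [hΘpos] with ω hω using hle _ hω
    _ = _ := by
        rw [lintegral_const_mul _ (by fun_prop), lintegral_add_left (by fun_prop)]
        rfl

/-- Weighted copies of asymptotically independent variables are jointly large with negligible
probability. -/
lemma AsympIndep.tendsto_joint_tail {P : Measure Ω} [IsProbabilityMeasure P]
    {X₁ X₂ Θ₁ Θ₂ : Ω → ℝ} (hX₁ : Measurable X₁) (hX₂ : Measurable X₂) (hΘ₁ : Measurable Θ₁)
    (hΘ₂ : Measurable Θ₂) (hX₁pos : ∀ᵐ ω ∂P, 0 < X₁ ω) (hX₂pos : ∀ᵐ ω ∂P, 0 < X₂ ω)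
    (hΘ₁pos : ∀ᵐ ω ∂P, 0 < Θ₁ ω) (hAI : AsympIndep P X₁ X₂)
    (hind : IndepFun (fun ω => (Θ₁ ω, Θ₂ ω)) (fun ω => (X₁ ω, X₂ ω)) P)
    {h : ℝ → ℝ} (hpos : ∀ x, 0 < x → 0 < h x) {p q C x₁ : ℝ} (hC : 0 ≤ C)
    (htail : ∀ x, x₁ ≤ x → ∀ θ, 0 < θ → P {ω | x / θ < X₁ ω} ≤
      ENNReal.ofReal (C * h x) * (ENNReal.ofReal (θ ^ p) + ENNReal.ofReal (θ ^ q)))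
    (hm₁ : momE P Θ₁ p + momE P Θ₁ q ≠ ⊤) (hm₂ : momE P Θ₂ p + momE P Θ₂ q ≠ ⊤) :
    Tendsto (fun x => (P {ω | x < Θ₁ ω * X₁ ω ∧ x < Θ₂ ω * X₂ ω}).toReal / h x) atTop (𝓝 0) := by
  set Q : ℝ → ℝ≥0∞ := fun y => P {ω | y < X₁ ω ∧ y < X₂ ω} with hQ
  set M : Ω → ℝ := fun ω => max (Θ₁ ω) (Θ₂ ω) with hM
  have hMmeas : Measurable M := hΘ₁.max hΘ₂
  have hMpos : ∀ᵐ ω ∂P, 0 < M ω := by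
    filter_upwards [hΘ₁pos] with ω hω using lt_max_of_lt_left hω
  have hQanti : Antitone Q := fun a b hab => measure_mono fun ω hω =>
    ⟨hab.trans_lt hω.1, hab.trans_lt hω.2⟩
  have hjoint : ∀ x, P {ω | x < Θ₁ ω * X₁ ω ∧ x < Θ₂ ω * X₂ ω} ≤ ∫⁻ ω, Q (x / M ω) ∂P := by
    intro x
    have hindM : IndepFun M (fun ω => (X₁ ω, X₂ ω)) P :=
      hind.comp (φ := fun z : ℝ × ℝ => max z.1 z.2) (ψ := id) (by fun_prop) measurable_id
    have hset : MeasurableSet {z : ℝ × (ℝ × ℝ) | x / z.1 < z.2.1 ∧ x / z.1 < z.2.2} :=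
      (measurableSet_lt (f := fun z : ℝ × (ℝ × ℝ) => x / z.1) (g := fun z => z.2.1)
        (by fun_prop) (by fun_prop)).inter
        (measurableSet_lt (f := fun z : ℝ × (ℝ × ℝ) => x / z.1) (g := fun z => z.2.2)
        (by fun_prop) (by fun_prop))
    calc P {ω | x < Θ₁ ω * X₁ ω ∧ x < Θ₂ ω * X₂ ω}
        ≤ P {ω | x / M ω < X₁ ω ∧ x / M ω < X₂ ω} := by
          refine measure_mono_ae ?_
          filter_upwards [hMpos, hX₁pos, hX₂pos] with ω hω h1 h2 hlt
          have hlt' : x < Θ₁ ω * X₁ ω ∧ x < Θ₂ ω * X₂ ω := hlt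
          have k1 : Θ₁ ω ≤ M ω := le_max_left _ _
          have k2 : Θ₂ ω ≤ M ω := le_max_right _ _
          refine ⟨(div_lt_iff₀ hω).2 ?_, (div_lt_iff₀ hω).2 ?_⟩
          · nlinarith [hlt'.1]
          · nlinarith [hlt'.2]
      _ = ∫⁻ ω, {z : ℝ × (ℝ × ℝ) | x / z.1 < z.2.1 ∧ x / z.1 < z.2.2}.indicator 1
            (M ω, (X₁ ω, X₂ ω)) ∂P := by
          rw [← lintegral_indicator_one (s := {ω | x / M ω < X₁ ω ∧ x / M ω < X₂ ω})
            ((measurableSet_lt (by fun_prop) hX₁).inter (measurableSet_lt (by fun_prop) hX₂))]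
          rfl
      _ = ∫⁻ ω, ∫⁻ ω', {z : ℝ × (ℝ × ℝ) | x / z.1 < z.2.1 ∧ x / z.1 < z.2.2}.indicator 1
            (M ω, (X₁ ω', X₂ ω')) ∂P ∂P :=
          lintegral_comp_indepFun hMmeas (hX₁.prodMk hX₂) hindM
            (f := fun m v => {z : ℝ × (ℝ × ℝ) | x / z.1 < z.2.1 ∧ x / z.1 < z.2.2}.indicator 1
              (m, v)) (measurable_one.indicator hset)
      _ = _ := by
          congr 1 with ω
          simp only [hQ]
          rw [← lintegral_indicator_one (s := {ω' | x / M ω < X₁ ω' ∧ x / M ω < X₂ ω'})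
            ((measurableSet_lt (by fun_prop) hX₁).inter (measurableSet_lt (by fun_prop) hX₂))]
          rfl
  have hlim : Tendsto (fun x => ∫⁻ ω, Q (x / M ω) / ENNReal.ofReal (h x) ∂P) atTop (𝓝 0) := by
    have := tendsto_lintegral_filter_of_dominated_convergence (μ := P) (l := atTop)
      (F := fun x ω => Q (x / M ω) / ENNReal.ofReal (h x)) (f := fun _ => 0)
      (fun ω => ENNReal.ofReal C * ((ENNReal.ofReal (Θ₁ ω ^ p) + ENNReal.ofReal (Θ₁ ω ^ q)) +
        (ENNReal.ofReal (Θ₂ ω ^ p) + ENNReal.ofReal (Θ₂ ω ^ q)))) ?_ ?_ ?_ ?_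
    · simpa using this
    · exact Eventually.of_forall fun x =>
        (hQanti.measurable.comp (by fun_prop)).div_const _
    · filter_upwards [eventually_ge_atTop x₁, eventually_gt_atTop 0] with x hx hx0
      filter_upwards [hMpos] with ω hω
      have hhx := hpos x hx0
      refine ENNReal.div_le_of_le_mul ?_
      calc Q (x / M ω) ≤ P {ω' | x / M ω < X₁ ω'} := measure_mono fun _ h => h.1
        _ ≤ ENNReal.ofReal (C * h x) * (ENNReal.ofReal (M ω ^ p) + ENNReal.ofReal (M ω ^ q)) :=
            htail x hx _ hω
        _ ≤ ENNReal.ofReal (C * h x) * ((ENNReal.ofReal (Θ₁ ω ^ p) + ENNReal.ofReal (Θ₁ ω ^ q)) +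
            (ENNReal.ofReal (Θ₂ ω ^ p) + ENNReal.ofReal (Θ₂ ω ^ q))) := by
            refine mul_le_mul_right ?_ _
            rcases max_choice (Θ₁ ω) (Θ₂ ω) with e | e
            · simp only [hM, e]; exact le_self_add
            · simp only [hM, e]; exact le_add_self
        _ = _ := by rw [ENNReal.ofReal_mul hC]; ring
    · rw [lintegral_const_mul _ (by fun_prop), lintegral_add_left (by fun_prop),
        lintegral_add_left (by fun_prop), lintegral_add_left (by fun_prop)]
      exact ENNReal.mul_ne_top ENNReal.ofReal_ne_top (ENNReal.add_ne_top.2 ⟨hm₁, hm₂⟩)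
    · filter_upwards [hMpos] with ω hω
      set m := M ω
      have hdiv : Tendsto (fun x : ℝ => x / m) atTop atTop := tendsto_id.atTop_div_const hω
      have h1 := hAI.1.comp hdiv
      have hb : ∀ᶠ x in atTop, ‖(P {ω | x / m < X₁ ω}).toReal / h x‖ ≤
          C * (m ^ p + m ^ q) := by
        filter_upwards [eventually_ge_atTop x₁, eventually_gt_atTop 0] with x hx hx0
        have hhx := hpos x hx0
        rw [Real.norm_of_nonneg (by positivity), div_le_iff₀ hhx]
        refine ENNReal.toReal_le_of_le_ofReal (by positivity) ?_
        refine (htail x hx m hω).trans (le_of_eq ?_)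
        rw [← ENNReal.ofReal_add (by positivity) (by positivity),
          ← ENNReal.ofReal_mul (by positivity)]
        congr 1
        ring
      have h2 : Tendsto (fun x => (Q (x / m)).toReal / h x) atTop (𝓝 0) := by
        refine (h1.zero_mul_isBoundedUnder_le ⟨_, eventually_map.2 hb⟩).congr' ?_
        filter_upwards with x
        simp only [Function.comp, hQ]
        by_cases h0 : (P {ω | x / m < X₁ ω}).toReal = 0
        · have : (P {ω | x / m < X₁ ω ∧ x / m < X₂ ω}).toReal = 0 := by
            refine le_antisymm (h0 ▸ ?_) ENNReal.toReal_nonneg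
            exact ENNReal.toReal_mono (measure_ne_top _ _) (measure_mono fun _ h => h.1)
          simp [h0, this]
        · rw [div_mul_div_cancel₀ h0]
      have h3 := ENNReal.tendsto_ofReal h2
      rw [ENNReal.ofReal_zero] at h3
      refine h3.congr' ?_
      filter_upwards [eventually_gt_atTop 0] with x hx
      rw [ENNReal.ofReal_div_of_pos (hpos x hx), ENNReal.ofReal_toReal (measure_ne_top _ _)]
  have hlim' := (ENNReal.tendsto_toReal ENNReal.zero_ne_top).comp hlim
  rw [ENNReal.toReal_zero] at hlim'
  have hfin : ∀ᶠ x in atTop, ∫⁻ ω, Q (x / M ω) / ENNReal.ofReal (h x) ∂P < ⊤ :=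
    hlim.eventually_lt_const ENNReal.zero_lt_top
  refine squeeze_zero' ?_ ?_ hlim'
  · filter_upwards [eventually_gt_atTop 0] with x hx
    have := hpos x hx
    positivity
  · filter_upwards [hfin, eventually_gt_atTop 0] with x hx hx0
    have hhx := hpos x hx0
    nth_rewrite 1 [← ENNReal.toReal_ofReal hhx.le]
    rw [← ENNReal.toReal_div, Function.comp]
    refine ENNReal.toReal_mono hx.ne ?_
    simp_rw [ENNReal.div_eq_inv_mul]
    rw [lintegral_const_mul' _ _ (by simp [hhx])]
    exact mul_le_mul_right (hjoint x) _

lemma exists_of_ofReal_lt_tsum {z : ℕ → ℝ} {n : ℕ} (hn : 0 < n) {δ x : ℝ} (hx : 0 < x)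
    (hδ : 0 < δ) (hδ2 : δ < 1 / 2) (hlt : ENNReal.ofReal x < ∑' t, ENNReal.ofReal (z t)) :
    (∃ t ∈ Finset.range n, (1 - 2 * δ) * x < z t) ∨
      (∃ t ∈ Finset.range n, ∃ s ∈ Finset.range t, δ / n * x < z s ∧ δ / n * x < z t) ∨
      ENNReal.ofReal (δ * x) < ∑' t, ENNReal.ofReal (z (t + n)) := by
  by_contra! hcon
  obtain ⟨h1, h2, h3⟩ := hcon
  refine hlt.not_ge ?_
  have hn' : (0 : ℝ) < n := by exact_mod_cast hn
  have hc : 0 ≤ δ / n * x := by positivity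
  have hδx : 0 ≤ (1 - 2 * δ) * x := mul_nonneg (by linarith) hx.le
  have hnc : n * (δ / n * x) = δ * x := by field_simp
  have hone : ∃ s, ∀ t ∈ Finset.range n,
      max (z t) 0 ≤ δ / n * x + if t = s then (1 - 2 * δ) * x else 0 := by
    by_cases hex : ∃ s ∈ Finset.range n, δ / n * x < z s
    · obtain ⟨s, hs, hzs⟩ := hex
      refine ⟨s, fun t ht => ?_⟩
      split_ifs with hts
      · exact max_le (by linarith [h1 t ht]) (by linarith)
      · rw [add_zero]
        refine max_le ?_ hc
        rcases lt_or_gt_of_ne hts with hlt | hlt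
        · by_contra! hcon
          exact (h2 s hs t (Finset.mem_range.2 hlt) hcon).not_gt hzs
        · exact h2 t ht s (Finset.mem_range.2 hlt) hzs
    · push Not at hex
      refine ⟨n, fun t ht => ?_⟩
      have : t ≠ n := (Finset.mem_range.1 ht).ne
      rw [if_neg this, add_zero]
      exact max_le (hex t ht) hc
  have hfin : ∑ t ∈ Finset.range n, ENNReal.ofReal (z t) ≤ ENNReal.ofReal ((1 - δ) * x) := by
    obtain ⟨s, hs⟩ := hone
    calc ∑ t ∈ Finset.range n, ENNReal.ofReal (z t)
        = ∑ t ∈ Finset.range n, ENNReal.ofReal (max (z t) 0) := by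
          refine Finset.sum_congr rfl fun t _ => ?_
          rw [ENNReal.ofReal_max, ENNReal.ofReal_zero, max_eq_left zero_le]
      _ = ENNReal.ofReal (∑ t ∈ Finset.range n, max (z t) 0) :=
          (ENNReal.ofReal_sum_of_nonneg fun t _ => le_max_right _ _).symm
      _ ≤ _ := by
          apply ENNReal.ofReal_le_ofReal
          refine (Finset.sum_le_sum hs).trans ?_
          rw [Finset.sum_add_distrib, Finset.sum_const, Finset.card_range, nsmul_eq_mul, hnc,
            Finset.sum_ite_eq']
          split_ifs
          · linarith
          · linarith
  calc ∑' t, ENNReal.ofReal (z t)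
      = ∑ t ∈ Finset.range n, ENNReal.ofReal (z t) + ∑' t, ENNReal.ofReal (z (t + n)) :=
        (ENNReal.summable.sum_add_tsum_nat_add' (k := n)).symm
    _ ≤ ENNReal.ofReal ((1 - δ) * x) + ENNReal.ofReal (δ * x) := add_le_add hfin h3
    _ = ENNReal.ofReal x := by
        rw [← ENNReal.ofReal_add (mul_nonneg (by linarith) hx.le) (by positivity)]
        congr 1
        ring

/-- A Bonferroni inequality. -/
lemma sum_measure_le_measure_biUnion_add {P : Measure Ω} {A : ℕ → Set Ω}
    (hA : ∀ t, MeasurableSet (A t)) (n : ℕ) :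
    ∑ t ∈ Finset.range n, P (A t) ≤ P (⋃ t ∈ Finset.range n, A t) +
      ∑ t ∈ Finset.range n, ∑ s ∈ Finset.range t, P (A s ∩ A t) := by
  induction n with
  | zero => simp
  | succ n ih =>
    have hU : (⋃ t ∈ Finset.range (n + 1), A t) = (⋃ t ∈ Finset.range n, A t) ∪ A n := by
      rw [Finset.range_add_one, Finset.set_biUnion_insert, Set.union_comm]
    have hI : P ((⋃ t ∈ Finset.range n, A t) ∩ A n) ≤
        ∑ s ∈ Finset.range n, P (A s ∩ A n) := by
      rw [Set.iUnion₂_inter]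
      exact measure_biUnion_finset_le _ _
    rw [Finset.sum_range_succ, Finset.sum_range_succ, hU]
    calc ∑ t ∈ Finset.range n, P (A t) + P (A n)
        ≤ P (⋃ t ∈ Finset.range n, A t) +
            ∑ t ∈ Finset.range n, ∑ s ∈ Finset.range t, P (A s ∩ A t) + P (A n) := by gcongr
      _ = P ((⋃ t ∈ Finset.range n, A t) ∪ A n) + P ((⋃ t ∈ Finset.range n, A t) ∩ A n) +
            ∑ t ∈ Finset.range n, ∑ s ∈ Finset.range t, P (A s ∩ A t) := by
          rw [measure_union_add_inter _ (hA n)]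
          ring
      _ ≤ _ := by
          rw [add_assoc, add_comm (P (_ ∩ _))]
          gcongr

/-- The principle of a single big jump for an infinite series of variables whose joint tails and
remainders are negligible. -/
lemma tendsto_sum_tail_div_tail_tsum {P : Measure Ω} [IsProbabilityMeasure P] {Z : ℕ → Ω → ℝ}
    (hZ : ∀ t, Measurable (Z t)) {α x₁ : ℝ} {a : ℕ → ℝ≥0∞} {b : ℝ → ℕ → ℝ≥0∞}
    (hRV : RegVarying (fun x => (∑' t, P {ω | x < Z t ω}).toReal) (-α))
    (hpair : ∀ s t, s ≠ t → Tendsto (fun x => (P {ω | x < Z s ω ∧ x < Z t ω}).toReal /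
      (∑' t, P {ω | x < Z t ω}).toReal) atTop (𝓝 0))
    (ha : Tendsto a atTop (𝓝 0)) (hb : ∀ δ, 0 < δ → Tendsto (b δ) atTop (𝓝 0))
    (htail : ∀ n x, x₁ ≤ x →
      ∑' t, P {ω | x < Z (t + n) ω} ≤ a n * ∑' t, P {ω | x < Z t ω})
    (hrem : ∀ δ, 0 < δ → δ ≤ 1 → ∀ n x, x₁ ≤ x →
      P {ω | ENNReal.ofReal (δ * x) < ∑' t, ENNReal.ofReal (Z (t + n) ω)} ≤
        b δ n * ∑' t, P {ω | x < Z t ω}) :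
    Tendsto (fun x => (∑' t, P {ω | x < Z t ω}).toReal /
      (P {ω | ENNReal.ofReal x < ∑' t, ENNReal.ofReal (Z t ω)}).toReal) atTop (𝓝 1) := by
  set H : ℝ → ℝ≥0∞ := fun x => ∑' t, P {ω | x < Z t ω} with hH
  set D : ℝ → ℝ≥0∞ := fun x => P {ω | ENNReal.ofReal x < ∑' t, ENNReal.ofReal (Z t ω)} with hD
  set J : ℕ → ℝ → ℝ≥0∞ := fun n x =>
    ∑ t ∈ Finset.range n, ∑ s ∈ Finset.range t, P {ω | x < Z s ω ∧ x < Z t ω} with hJ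
  have hpos : ∀ x, 0 < x → 0 < (H x).toReal := hRV.1
  have hfin : ∀ x, 0 < x → H x ≠ ⊤ := fun x hx => (ENNReal.toReal_pos_iff.1 (hpos x hx)).2.ne
  have hDfin : ∀ x, D x ≠ ⊤ := fun x => measure_ne_top _ _
  have hJfin : ∀ n x, J n x ≠ ⊤ := fun n x =>
    ENNReal.sum_ne_top.2 fun t _ => ENNReal.sum_ne_top.2 fun s _ => measure_ne_top _ _
  have hJlim : ∀ n, Tendsto (fun x => (J n x).toReal / (H x).toReal) atTop (𝓝 0) := by
    intro n
    have : Tendsto (fun x => ∑ t ∈ Finset.range n, ∑ s ∈ Finset.range t,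
        (P {ω | x < Z s ω ∧ x < Z t ω}).toReal / (H x).toReal) atTop
        (𝓝 (∑ t ∈ Finset.range n, ∑ s ∈ Finset.range t, 0)) :=
      tendsto_finsetSum _ fun t _ => tendsto_finsetSum _ fun s hs =>
        hpair s t (Finset.mem_range.1 hs).ne
    simp only [Finset.sum_const_zero] at this
    refine this.congr fun x => ?_
    rw [hJ, ENNReal.toReal_sum fun t _ => ENNReal.sum_ne_top.2 fun s _ => measure_ne_top _ _,
      Finset.sum_div]
    refine Finset.sum_congr rfl fun t _ => ?_
    rw [ENNReal.toReal_sum fun s _ => measure_ne_top _ _, Finset.sum_div]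
  have hJlim' : ∀ n c, 0 < c →
      Tendsto (fun x => (J n (c * x)).toReal / (H x).toReal) atTop (𝓝 0) := by
    intro n c hc
    have h1 := ((hJlim n).comp (tendsto_id.const_mul_atTop hc)).mul (hRV.2 c hc)
    rw [zero_mul] at h1
    refine h1.congr' ?_
    filter_upwards [eventually_gt_atTop 0] with x hx
    have := (hpos (c * x) (by positivity)).ne'
    simp only [Function.comp, id]
    exact div_mul_div_cancel₀ this
  have hlower : ∀ η, 0 < η → ∀ᶠ x in atTop, (1 - η) ≤ (D x).toReal / (H x).toReal := by
    intro η hη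
    obtain ⟨n, hn⟩ := (ha.eventually_lt_const
      (ENNReal.ofReal_pos.2 (half_pos hη))).exists
    filter_upwards [eventually_ge_atTop x₁, eventually_gt_atTop 0,
      (hJlim n).eventually_lt_const (half_pos hη)] with x hx hx0 hJx
    have hHx := hpos x hx0
    rw [div_lt_iff₀ hHx] at hJx
    rw [le_div_iff₀ hHx]
    have key : H x ≤ D x + J n x + ENNReal.ofReal (η / 2) * H x := by
      calc H x = ∑ t ∈ Finset.range n, P {ω | x < Z t ω} + ∑' t, P {ω | x < Z (t + n) ω} :=
            (ENNReal.summable.sum_add_tsum_nat_add' (k := n)).symm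
        _ ≤ (P (⋃ t ∈ Finset.range n, {ω | x < Z t ω}) + J n x) + a n * H x :=
            add_le_add (sum_measure_le_measure_biUnion_add
              (fun t => measurableSet_lt measurable_const (hZ t)) n) (htail n x hx)
        _ ≤ _ := by
            gcongr
            refine measure_mono fun ω hω => ?_
            obtain ⟨t, -, ht⟩ := Set.mem_iUnion₂.1 hω
            have ht' : x < Z t ω := ht
            exact ((ENNReal.ofReal_lt_ofReal_iff (hx0.trans ht')).2 ht').trans_le
              (ENNReal.le_tsum (f := fun t => ENNReal.ofReal (Z t ω)) t)
    have hE : ENNReal.ofReal (η / 2) * H x ≠ ⊤ :=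
      ENNReal.mul_ne_top ENNReal.ofReal_ne_top (hfin x hx0)
    have key' := ENNReal.toReal_mono
      (ENNReal.add_ne_top.2 ⟨ENNReal.add_ne_top.2 ⟨hDfin x, hJfin n x⟩, hE⟩) key
    rw [ENNReal.toReal_add (ENNReal.add_ne_top.2 ⟨hDfin x, hJfin n x⟩) hE,
      ENNReal.toReal_add (hDfin x) (hJfin n x), ENNReal.toReal_mul,
      ENNReal.toReal_ofReal (half_pos hη).le] at key'
    linarith
  have hupper : ∀ η, 0 < η → ∀ᶠ x in atTop, (D x).toReal / (H x).toReal ≤ 1 + η := by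
    intro η hη
    obtain ⟨δ, hδ0, hδ2, hδη⟩ : ∃ δ : ℝ, 0 < δ ∧ δ < 1 / 2 ∧
        (1 - 2 * δ) ^ (-α) < 1 + η / 3 := by
      have hcont : Tendsto (fun δ : ℝ => (1 - 2 * δ) ^ (-α)) (𝓝[>] 0) (𝓝 1) := by
        have : ContinuousAt (fun δ : ℝ => (1 - 2 * δ) ^ (-α)) 0 :=
          ContinuousAt.rpow_const (by fun_prop) (Or.inl (by norm_num))
        have h := this.tendsto
        simp only [mul_zero, sub_zero, Real.one_rpow] at h
        exact h.mono_left nhdsWithin_le_nhds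
      have e1 := hcont.eventually_lt_const (show (1 : ℝ) < 1 + η / 3 by linarith)
      have e2 : ∀ᶠ δ : ℝ in 𝓝[>] 0, δ ∈ Set.Ioo (0 : ℝ) (1 / 2) :=
        Ioo_mem_nhdsGT (by norm_num)
      obtain ⟨δ, h1, h2⟩ := (e1.and e2).exists
      exact ⟨δ, h2.1, h2.2, h1⟩
    obtain ⟨n, hn, hn0⟩ := (((hb δ hδ0).eventually_lt_const
      (ENNReal.ofReal_pos.2 (show 0 < η / 3 by linarith))).and (eventually_gt_atTop 0)).exists
    have hn' : (0 : ℝ) < n := by exact_mod_cast hn0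
    have hδ1 : 0 < 1 - 2 * δ := by linarith
    filter_upwards [eventually_ge_atTop x₁, eventually_gt_atTop 0,
      (hJlim' n (δ / n) (by positivity)).eventually_lt_const (show 0 < η / 3 by linarith),
      (hRV.2 (1 - 2 * δ) hδ1).eventually_lt_const hδη] with x hx hx0 hJx hhx
    have hHx := hpos x hx0
    have hx' : 0 < (1 - 2 * δ) * x := by positivity
    rw [div_lt_iff₀ hHx] at hJx hhx
    rw [div_le_iff₀ hHx]
    have key : D x ≤ H ((1 - 2 * δ) * x) + (J n (δ / n * x) + ENNReal.ofReal (η / 3) * H x) := by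
      calc D x ≤ P ((⋃ t ∈ Finset.range n, {ω | (1 - 2 * δ) * x < Z t ω}) ∪
            ((⋃ t ∈ Finset.range n, ⋃ s ∈ Finset.range t,
              {ω | δ / n * x < Z s ω ∧ δ / n * x < Z t ω}) ∪
              {ω | ENNReal.ofReal (δ * x) < ∑' t, ENNReal.ofReal (Z (t + n) ω)})) := by
            refine measure_mono fun ω hω => ?_
            rcases exists_of_ofReal_lt_tsum hn0 hx0 hδ0 hδ2 hω with ⟨t, ht, h⟩ | ⟨t, ht, s, hs, h⟩ | h
            · exact Or.inl (Set.mem_iUnion₂.2 ⟨t, ht, h⟩)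
            · exact Or.inr (Or.inl (Set.mem_iUnion₂.2 ⟨t, ht, Set.mem_iUnion₂.2 ⟨s, hs, h⟩⟩))
            · exact Or.inr (Or.inr h)
        _ ≤ _ := by
            refine (measure_union_le _ _).trans (add_le_add ?_ ((measure_union_le _ _).trans
              (add_le_add ?_ ?_)))
            · exact (measure_biUnion_finset_le _ _).trans (ENNReal.sum_le_tsum _)
            · refine (measure_biUnion_finset_le _ _).trans (Finset.sum_le_sum fun t _ => ?_)
              exact measure_biUnion_finset_le _ _
            · refine (hrem δ hδ0 (by linarith) n x hx).trans ?_
              exact mul_le_mul_left hn.le _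
    have hE : ENNReal.ofReal (η / 3) * H x ≠ ⊤ :=
      ENNReal.mul_ne_top ENNReal.ofReal_ne_top (hfin x hx0)
    have hE2 := ENNReal.add_ne_top.2 ⟨hJfin n (δ / n * x), hE⟩
    have key' := ENNReal.toReal_mono (ENNReal.add_ne_top.2 ⟨hfin _ hx', hE2⟩) key
    rw [ENNReal.toReal_add (hfin _ hx') hE2, ENNReal.toReal_add (hJfin _ _) hE,
      ENNReal.toReal_mul, ENNReal.toReal_ofReal (show 0 ≤ η / 3 by linarith)] at key'
    linarith
  have hlim : Tendsto (fun x => (D x).toReal / (H x).toReal) atTop (𝓝 1) := by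
    refine tendsto_order.2 ⟨fun c hc => ?_, fun c hc => ?_⟩
    · filter_upwards [hlower ((1 - c) / 2) (by linarith)] with x hx
      linarith
    · filter_upwards [hupper ((c - 1) / 2) (by linarith)] with x hx
      linarith
  simpa using hlim.inv₀ one_ne_zero

lemma exists_tail_le_tail_mul {P : Measure Ω} [IsProbabilityMeasure P] {X Θ : Ω → ℝ}
    (hΘpos : ∀ᵐ ω ∂P, 0 < Θ ω) (hind : IndepFun Θ X P) :
    ∃ a > 0, ∃ c ≥ 0, ∀ x, 0 < x →
      P {ω | x < X ω} ≤ ENNReal.ofReal c * P {ω | a * x < Θ ω * X ω} := by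
  obtain ⟨n, hn⟩ : ∃ n : ℕ, P {ω | 1 / ((n : ℝ) + 1) < Θ ω} ≠ 0 := by
    by_contra! hzero
    have hcov : P (⋃ n : ℕ, {ω | 1 / ((n : ℝ) + 1) < Θ ω}) = 0 := measure_iUnion_null hzero
    have hall : ∀ᵐ ω ∂P, False := by
      filter_upwards [hΘpos, measure_eq_zero_iff_ae_notMem.1 hcov] with ω hω hnot
      obtain ⟨n, hn⟩ := exists_nat_one_div_lt hω
      exact hnot (Set.mem_iUnion.2 ⟨n, hn⟩)
    exact hall.exists.choose_spec
  set a : ℝ := 1 / ((n : ℝ) + 1) with ha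
  have ha0 : 0 < a := by positivity
  set c := P {ω | a < Θ ω} with hc
  have hc_top : c ≠ ⊤ := measure_ne_top _ _
  refine ⟨a, ha0, c.toReal⁻¹, by positivity, fun x hx => ?_⟩
  have hmul : c * P {ω | x < X ω} ≤ P {ω | a * x < Θ ω * X ω} := by
    have := hind.measure_inter_preimage_eq_mul (Set.Ioi a) (Set.Ioi x) measurableSet_Ioi
      measurableSet_Ioi
    refine (this.symm.le).trans (measure_mono fun ω hω => ?_)
    exact mul_lt_mul'' hω.1 hω.2 ha0.le hx.le
  rw [ENNReal.ofReal_inv_of_pos (ENNReal.toReal_pos hn hc_top), ENNReal.ofReal_toReal hc_top]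
  calc P {ω | x < X ω} = c⁻¹ * (c * P {ω | x < X ω}) := by
        rw [← mul_assoc, ENNReal.inv_mul_cancel hn hc_top, one_mul]
    _ ≤ _ := mul_le_mul_right hmul _

lemma le_tsum_min_of_lt_tsum {z : ℕ → ℝ≥0∞} {y x : ℝ≥0∞} (hyx : y ≤ x) (h : y < ∑' t, z t) :
    y ≤ ∑' t, min (z t) x := by
  by_cases hex : ∃ t, x ≤ z t
  · obtain ⟨t, ht⟩ := hex
    calc y ≤ min (z t) x := le_min (hyx.trans ht) hyx
      _ ≤ _ := ENNReal.le_tsum (f := fun t => min (z t) x) t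
  · push Not at hex
    rw [tsum_congr fun t => min_eq_left (hex t).le]
    exact h.le

/-- Proposition 4.7: if the `X_t` are identically distributed, pairwise asymptotically
independent and positive, the positive weights `Θ_t` satisfy the RW moment conditions and
are independent of `{X_t}`, and `x ↦ Σ_t P[Θ_t X_t > x]` is regularly varying of index `-α`,
then `Σ_t P[Θ_t X_t > x] ~ P[X_(∞) > x]` as `x → ∞` and `X_(∞)` is finite a.s. -/
theorem stmt5 {Ω : Type*} [MeasurableSpace Ω] (P : Measure Ω) [IsProbabilityMeasure P]
    (X Θ : ℕ → Ω → ℝ) (α : ℝ) (hα : 0 < α)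
    (hXmeas : ∀ t, Measurable (X t)) (hΘmeas : ∀ t, Measurable (Θ t))
    (hXpos : ∀ t, ∀ᵐ ω ∂P, 0 < X t ω) (hΘpos : ∀ t, ∀ᵐ ω ∂P, 0 < Θ t ω)
    (hident : ∀ t, IdentDistrib (X t) (X 0) P P)
    (hpair : ∀ s t : ℕ, s ≠ t → AsympIndep P (X s) (X t))
    (hindep : IndepFun (fun ω => fun t => Θ t ω) (fun ω => fun t => X t ω) P)
    (hRW : RWConditions P Θ α)
    (hRV : RegVarying
      (fun x : ℝ => (∑' t : ℕ, P {ω | x < Θ t ω * X t ω}).toReal) (-α)) :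
    Tendsto (fun x : ℝ =>
        (∑' t : ℕ, P {ω | x < Θ t ω * X t ω}).toReal /
          (P {ω | ENNReal.ofReal x < ∑' t : ℕ, ENNReal.ofReal (Θ t ω * X t ω)}).toReal)
      atTop (nhds 1) ∧
      (∀ᵐ ω ∂P, (∑' t : ℕ, ENNReal.ofReal (Θ t ω * X t ω)) ≠ ⊤) := by
  set Z : ℕ → Ω → ℝ := fun t ω => Θ t ω * X t ω with hZ
  have hZmeas : ∀ t, Measurable (Z t) := fun t => (hΘmeas t).mul (hXmeas t)
  set H : ℝ → ℝ≥0∞ := fun x => ∑' t, P {ω | x < Z t ω} with hH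
  set h : ℝ → ℝ := fun x => (H x).toReal with hh
  have hpos : ∀ x, 0 < x → 0 < h x := hRV.1
  have hHtop : ∀ x, 0 < x → H x ≠ ⊤ := fun x hx htop => by
    have := hpos x hx
    simp [hh, htop] at this
  have hofReal : ∀ x, 0 < x → ENNReal.ofReal (h x) = H x := fun x hx =>
    ENNReal.ofReal_toReal (hHtop x hx)
  have hanti : ∀ x y, 0 < x → x ≤ y → h y ≤ h x := fun x y hx hxy =>
    ENNReal.toReal_mono (hHtop x hx)
      (ENNReal.tsum_le_tsum fun t => measure_mono fun ω hω => hxy.trans_lt hω)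
  obtain ⟨p, q, hq, hqα, hαp, hsum, S, hS, hbound⟩ := hRW.exists_moment_bound hΘmeas hΘpos
  have hp : 0 < p := hα.trans hαp
  have hind : ∀ t, IndepFun (Θ t) (X t) P := fun t =>
    hindep.comp (measurable_pi_apply t) (measurable_pi_apply t)
  have hind₂ : ∀ s t, IndepFun (fun ω => (Θ s ω, Θ t ω)) (fun ω => (X s ω, X t ω)) P :=
    fun s t => hindep.comp (φ := fun v : ℕ → ℝ => (v s, v t)) (ψ := fun v : ℕ → ℝ => (v s, v t))
      (by fun_prop) (by fun_prop)
  obtain ⟨a, ha, c, hc, hXtail⟩ := exists_tail_le_tail_mul (hΘpos 0) (hind 0)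
  obtain ⟨C, hC, x₁, hx₁, hmom₀⟩ := exists_scaledTruncatedMoment_le
    (Y := fun ω => ENNReal.ofReal (X 0 ω)) (hXmeas 0).ennreal_ofReal hq hqα hαp hanti hRV ha hc
    (fun x hx => by
      rw [ENNReal.ofReal_mul hc, hofReal _ (mul_pos ha hx)]
      have hset : {ω | ENNReal.ofReal x < ENNReal.ofReal (X 0 ω)} = {ω | x < X 0 ω} := by
        ext ω
        exact ENNReal.ofReal_lt_ofReal_iff_of_nonneg hx.le
      rw [hset]
      exact (hXtail x hx).trans (mul_le_mul_right
        (ENNReal.le_tsum (f := fun t => P {ω | a * x < Z t ω}) 0) _))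
  have hmom : ∀ t x, x₁ ≤ x → ∀ θ, 0 < θ →
      ∫⁻ ω, (min (ENNReal.ofReal θ * ENNReal.ofReal (X t ω)) (ENNReal.ofReal x)) ^ p ∂P ≤
        ENNReal.ofReal (C * (x ^ p * h x)) *
          (ENNReal.ofReal (θ ^ p) + ENNReal.ofReal (θ ^ q)) := by
    intro t x hx θ hθ
    have := ((hident t).comp (u := fun y : ℝ =>
      (min (ENNReal.ofReal θ * ENNReal.ofReal y) (ENNReal.ofReal x)) ^ p)
      (by fun_prop)).lintegral_eq
    exact this.le.trans (hmom₀ x hx θ hθ)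
  have hZmom : ∀ t x, x₁ ≤ x →
      ∫⁻ ω, (min (ENNReal.ofReal (Z t ω)) (ENNReal.ofReal x)) ^ p ∂P ≤
        ENNReal.ofReal (C * (x ^ p * h x)) * (momE P (Θ t) p + momE P (Θ t) q) :=
    fun t x hx => lintegral_min_mul_rpow_le (hXmeas t) (hΘmeas t) (hΘpos t) (hind t)
      (hmom t x hx)
  have htail₁ : ∀ t x, x₁ ≤ x →
      P {ω | x < Z t ω} ≤ ENNReal.ofReal C * H x * (momE P (Θ t) p + momE P (Θ t) q) := by
    intro t x hx
    have hx0 := hx₁.trans_le hx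
    have := measure_le_of_lintegral_rpow_le
      (g := fun ω => min (ENNReal.ofReal (Z t ω)) (ENNReal.ofReal x))
      ((hZmeas t).ennreal_ofReal.min measurable_const) hp one_pos hx0 (hZmom t x hx)
    rw [Real.one_rpow, div_one, one_mul, ENNReal.ofReal_mul hC.le, hofReal x hx0] at this
    exact (measure_mono fun ω hω =>
      le_min (ENNReal.ofReal_le_ofReal (le_of_lt hω)) le_rfl).trans this
  have hrem : ∀ δ, 0 < δ → δ ≤ 1 → ∀ n x, x₁ ≤ x →
      P {ω | ENNReal.ofReal (δ * x) < ∑' t, ENNReal.ofReal (Z (t + n) ω)} ≤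
        ENNReal.ofReal (C / δ ^ p) * S n * H x := by
    intro δ hδ hδ1 n x hx
    have hx0 := hx₁.trans_le hx
    have hmeas : ∀ t, Measurable fun ω => min (ENNReal.ofReal (Z t ω)) (ENNReal.ofReal x) :=
      fun t => (hZmeas t).ennreal_ofReal.min measurable_const
    have := measure_le_of_lintegral_rpow_le
      (g := fun ω => ∑' t, min (ENNReal.ofReal (Z (t + n) ω)) (ENNReal.ofReal x))
      (Measurable.tsum fun t => hmeas (t + n)) hp hδ hx0
      (hbound n _ _ hmeas fun t => hZmom t x hx)
    rw [ENNReal.ofReal_mul (p := C / δ ^ p) (by positivity), hofReal x hx0, mul_right_comm] at this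
    refine (measure_mono fun ω hω => ?_).trans this
    exact le_tsum_min_of_lt_tsum
      (ENNReal.ofReal_le_ofReal (mul_le_of_le_one_left hx0.le hδ1)) hω
  have hconst : ∀ (r : ℝ) (u : ℕ → ℝ≥0∞), Tendsto u atTop (𝓝 0) →
      Tendsto (fun n => ENNReal.ofReal r * u n) atTop (𝓝 0) := fun r u hu => by
    simpa using ENNReal.Tendsto.const_mul hu (Or.inr (ENNReal.ofReal_ne_top (r := r)))
  refine ⟨tendsto_sum_tail_div_tail_tsum hZmeas (x₁ := x₁)
    (a := fun n => ENNReal.ofReal C * ∑' t, (momE P (Θ (t + n)) p + momE P (Θ (t + n)) q))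
    (b := fun δ n => ENNReal.ofReal (C / δ ^ p) * S n) hRV ?_
    (hconst _ _ (ENNReal.tendsto_sum_nat_add _ hsum)) (fun δ _ => hconst _ _ hS) ?_ hrem, ?_⟩
  · intro s t hst
    refine AsympIndep.tendsto_joint_tail (hXmeas s) (hXmeas t) (hΘmeas s) (hΘmeas t) (hXpos s)
      (hXpos t) (hΘpos s) (hpair s t hst) (hind₂ s t) hpos hC.le (x₁ := x₁)
      (fun x hx θ hθ => measure_div_lt_le (hXmeas s) hp (hx₁.trans_le hx) hθ (hmom s x hx θ hθ))
      (ENNReal.ne_top_of_tsum_ne_top hsum s) (ENNReal.ne_top_of_tsum_ne_top hsum t)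
  · intro n x hx
    calc ∑' t, P {ω | x < Z (t + n) ω}
        ≤ ∑' t, ENNReal.ofReal C * H x * (momE P (Θ (t + n)) p + momE P (Θ (t + n)) q) :=
          ENNReal.tsum_le_tsum fun t => htail₁ (t + n) x hx
      _ = _ := by rw [ENNReal.tsum_mul_left, mul_right_comm]
  · have hlim : Tendsto (fun n => ENNReal.ofReal (C / 1 ^ p) * S n * H x₁) atTop (𝓝 0) := by
      simpa using ENNReal.Tendsto.mul_const (hconst (C / 1 ^ p) S hS) (Or.inr (hHtop x₁ hx₁))
    have hnull : P {ω | ∑' t, ENNReal.ofReal (Z t ω) = ⊤} = 0 := by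
      refine le_antisymm (ge_of_tendsto' hlim fun n => ?_) zero_le
      refine (measure_mono fun ω hω => ?_).trans (hrem 1 one_pos le_rfl n x₁ le_rfl)
      have hω' : ∑' t, ENNReal.ofReal (Z t ω) = ⊤ := hω
      rw [← ENNReal.summable.sum_add_tsum_nat_add' (k := n), ENNReal.add_eq_top] at hω'
      have htop := hω'.resolve_left (ENNReal.sum_ne_top.2 fun t _ => ENNReal.ofReal_ne_top)
      show ENNReal.ofReal (1 * x₁) < ∑' t, ENNReal.ofReal (Z (t + n) ω)
      rw [htop]
      exact ENNReal.ofReal_lt_top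
    exact measure_eq_zero_iff_ae_notMem.1 hnull
end
end

section
/- Let ρ be a finite positive Borel measure on [0,∞) and fix α ∈ [0,2). The following are equivalent: (i) y ↦ ρ((y,∞)) is regularly varying of index −α; (ii) y ↦ ∫₀^∞ t²/(t²+y²) dρ(t) is regularly varying of index −α. If either condition holds, then ∫₀^∞ t²/(t²+y²) dρ(t) ~ c_α · ρ((y,∞)) as y→∞, where c_α = (πα/2)/sin(πα/2) for α ∈ (0,2) and c₀ = 1. -/
open MeasureTheory Filter Topology
open scoped ENNReal

noncomputable section

/-- `μ ∈ M_p`: a Borel probability measure on `[0,∞)` with finite `p`-th moment and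
infinite `(p+1)`-th moment. -/
def MemMp (μ : Measure ℝ) (p : ℕ) : Prop :=
  IsProbabilityMeasure μ ∧ μ (Set.Iio 0) = 0 ∧
    (∫⁻ t, ENNReal.ofReal (t ^ p) ∂μ) ≠ ⊤ ∧ (∫⁻ t, ENNReal.ofReal (t ^ (p + 1)) ∂μ) = ⊤

/-- The remainder term in the Laurent series expansion of the Cauchy transform of `μ`:
`r_G(z) = ∫₀^∞ t^{p+1} (z − t)⁻¹ dμ(t)`. -/
def rG (μ : Measure ℝ) (p : ℕ) (z : ℂ) : ℂ :=
  ∫ t : ℝ, (t : ℂ) ^ (p + 1) / (z - (t : ℂ)) ∂μ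

open Set

/-- The tail `y ↦ μ((y,∞))` of a measure. -/
def tailFun (μ : Measure ℝ) (y : ℝ) : ℝ := (μ (Ioi y)).toReal

/-- The Stieltjes-type transform `y ↦ ∫ t²/(t²+y²) dμ(t)`. -/
def stieltjesFun (μ : Measure ℝ) (y : ℝ) : ℝ := ∫ t : ℝ, t ^ 2 / (t ^ 2 + y ^ 2) ∂μ

section Constant

open Real

lemma lintegral_rpow_mul_exp_neg_mul_Ioi {a r : ℝ} (ha : 0 < a) (hr : 0 < r) :
    ∫⁻ t in Ioi (0 : ℝ), ENNReal.ofReal (t ^ (a - 1) * exp (-(r * t))) =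
      ENNReal.ofReal ((1 / r) ^ a * Gamma a) := by
  have h := integral_rpow_mul_exp_neg_mul_Ioi ha hr
  rw [← h, ofReal_integral_eq_lintegral_ofReal]
  · refine Integrable.of_integral_ne_zero ?_
    rw [h]
    have := Gamma_pos_of_pos ha
    positivity
  · filter_upwards [self_mem_ae_restrict measurableSet_Ioi] with t ht
    have : (0 : ℝ) < t := ht
    positivity

lemma lintegral_rpow_neg_div_one_add_sq {β : ℝ} (h0 : 0 ≤ β) (h1 : β < 1) :
    ∫⁻ w in Ioi (0 : ℝ), ENNReal.ofReal (w ^ (-β) / (1 + w) ^ 2) =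
      ENNReal.ofReal (Gamma (1 - β) * Gamma (1 + β)) := by
  have hΓ : 0 < Gamma (1 - β) := Gamma_pos_of_pos (by linarith)
  calc
    _ = ∫⁻ w in Ioi (0 : ℝ), ∫⁻ s in Ioi (0 : ℝ),
          ENNReal.ofReal (w ^ (-β) * (s * exp (-((1 + w) * s)))) := by
      refine setLIntegral_congr_fun measurableSet_Ioi fun w hw => ?_
      have hw : (0 : ℝ) < w := hw
      have h := lintegral_rpow_mul_exp_neg_mul_Ioi two_pos (r := 1 + w) (by positivity)
      simp only [ENNReal.ofReal_mul (rpow_nonneg hw.le (-β))]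
      rw [lintegral_const_mul _ (by fun_prop)]
      have e : ∀ s : ℝ, s ^ ((2 : ℝ) - 1) = s := fun s => by norm_num
      simp only [e] at h
      rw [h, ← ENNReal.ofReal_mul (by positivity)]
      congr 1
      rw [Gamma_two, rpow_two]
      field_simp
    _ = ∫⁻ s in Ioi (0 : ℝ), ∫⁻ w in Ioi (0 : ℝ),
          ENNReal.ofReal (w ^ (-β) * (s * exp (-((1 + w) * s)))) :=
      lintegral_lintegral_swap (by fun_prop)
    _ = ∫⁻ s in Ioi (0 : ℝ), ENNReal.ofReal (Gamma (1 - β)) *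
          ENNReal.ofReal (s ^ ((1 + β) - 1) * exp (-(1 * s))) := by
      refine setLIntegral_congr_fun measurableSet_Ioi fun s hs => ?_
      have hs : (0 : ℝ) < s := hs
      have h := lintegral_rpow_mul_exp_neg_mul_Ioi (a := 1 - β) (by linarith) hs
      have e : ∀ w : ℝ, w ^ (-β) * (s * exp (-((1 + w) * s))) =
          (s * exp (-s)) * (w ^ ((1 - β) - 1) * exp (-(s * w))) := fun w => by
        rw [show -((1 + w) * s) = -s + -(s * w) by ring, exp_add]
        ring_nf
      simp only [e, ENNReal.ofReal_mul (show 0 ≤ s * exp (-s) by positivity)]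
      rw [lintegral_const_mul _ (by fun_prop), h, ← ENNReal.ofReal_mul (by positivity),
        ← ENNReal.ofReal_mul hΓ.le]
      congr 1
      rw [one_div, inv_rpow hs.le, ← rpow_neg hs.le, one_mul,
        show 1 + β - 1 = 1 + -(1 - β) by ring, rpow_add hs, rpow_one]
      ring
    _ = _ := by
      rw [lintegral_const_mul _ (by fun_prop),
        lintegral_rpow_mul_exp_neg_mul_Ioi (by linarith) one_pos, ← ENNReal.ofReal_mul hΓ.le]
      simp

lemma Gamma_one_sub_mul_Gamma_one_add {β : ℝ} (h : β ≠ 0) :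
    Gamma (1 - β) * Gamma (1 + β) = π * β / sin (π * β) := by
  rw [add_comm, Gamma_add_one h, mul_left_comm, mul_comm (Gamma _), Gamma_mul_Gamma_one_sub]
  ring

lemma integral_rpow_neg_mul_kernel {α : ℝ} (h0 : 0 ≤ α) (h2 : α < 2) :
    ∫ v in Ioi (0 : ℝ), v ^ (-α) * (2 * v / (1 + v ^ 2) ^ 2) =
      if α = 0 then 1 else (π * α / 2) / sin (π * α / 2) := by
  have hsub := integral_comp_rpow_Ioi (fun w : ℝ => w ^ (-(α / 2)) / (1 + w) ^ 2) two_ne_zero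
  have hΓ : 0 < Gamma (1 - α / 2) * Gamma (1 + α / 2) :=
    mul_pos (Gamma_pos_of_pos (by linarith)) (Gamma_pos_of_pos (by linarith))
  have hw : ∫ w in Ioi (0 : ℝ), w ^ (-(α / 2)) / (1 + w) ^ 2 =
      Gamma (1 - α / 2) * Gamma (1 + α / 2) := by
    rw [integral_eq_lintegral_of_nonneg_ae, lintegral_rpow_neg_div_one_add_sq (by linarith)
      (by linarith), ENNReal.toReal_ofReal hΓ.le]
    · filter_upwards [self_mem_ae_restrict measurableSet_Ioi] with t ht
      have : (0 : ℝ) < t := ht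
      positivity
    · exact Measurable.aestronglyMeasurable (by fun_prop)
  rw [hw] at hsub
  have : ∫ v in Ioi (0 : ℝ), v ^ (-α) * (2 * v / (1 + v ^ 2) ^ 2) =
      Gamma (1 - α / 2) * Gamma (1 + α / 2) := by
    rw [← hsub]
    refine setIntegral_congr_fun measurableSet_Ioi fun v hv => ?_
    have hv : (0 : ℝ) < v := hv
    simp only [smul_eq_mul]
    rw [← rpow_mul hv.le, rpow_two, abs_two, show (2 : ℝ) - 1 = 1 by norm_num, rpow_one,
      show 2 * -(α / 2) = -α by ring]
    ring
  rw [this]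
  split_ifs with h
  · simp [h]
  · rw [Gamma_one_sub_mul_Gamma_one_add (by positivity)]
    ring_nf

lemma integral_rpow_neg_mul_kernel_pos {α : ℝ} (h0 : 0 ≤ α) (h2 : α < 2) :
    0 < if α = 0 then 1 else (π * α / 2) / sin (π * α / 2) := by
  split_ifs with h
  · exact one_pos
  · have hα : 0 < α := lt_of_le_of_ne h0 (Ne.symm h)
    have hπ := pi_pos
    exact div_pos (by positivity) (sin_pos_of_pos_of_lt_pi (by positivity) (by nlinarith))

lemma integrableOn_rpow_neg_mul_kernel {α : ℝ} (h0 : 0 ≤ α) (h2 : α < 2) :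
    IntegrableOn (fun v : ℝ => v ^ (-α) * (2 * v / (1 + v ^ 2) ^ 2)) (Ioi 0) := by
  refine Integrable.of_integral_ne_zero ?_
  rw [integral_rpow_neg_mul_kernel h0 h2]
  exact (integral_rpow_neg_mul_kernel_pos h0 h2).ne'

end Constant

section LayerCake

lemma ae_nonneg_of_measure_Iio_eq_zero {μ : Measure ℝ} (hμ : μ (Iio 0) = 0) :
    ∀ᵐ t ∂μ, (0 : ℝ) ≤ t := by
  filter_upwards [compl_mem_ae_iff.2 hμ] with t ht
  exact not_lt.1 ht

lemma tailFun_nonneg (μ : Measure ℝ) (y : ℝ) : 0 ≤ tailFun μ y := ENNReal.toReal_nonneg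

variable (μ : Measure ℝ) [IsFiniteMeasure μ]

lemma tailFun_antitone : Antitone (tailFun μ) := fun _ _ h =>
  ENNReal.toReal_mono (measure_ne_top _ _) (measure_mono (Ioi_subset_Ioi h))

lemma stieltjesFun_eq_integral_tailFun (hμ : μ (Iio 0) = 0) {y : ℝ} (hy : 0 < y) :
    stieltjesFun μ y = ∫ v in Ioi (0 : ℝ), tailFun μ (y * v) * (2 * v / (1 + v ^ 2) ^ 2) := by
  set g : ℝ → ℝ := fun t => 2 * t * y ^ 2 / (t ^ 2 + y ^ 2) ^ 2 with hg
  have hgc : Continuous g := by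
    refine Continuous.div (by fun_prop) (by fun_prop) fun t => ?_
    positivity
  have hprim : ∀ x : ℝ, ∫ t in (0 : ℝ)..x, g t = x ^ 2 / (x ^ 2 + y ^ 2) := fun x => by
    rw [intervalIntegral.integral_eq_sub_of_hasDerivAt
      (f := fun t => t ^ 2 / (t ^ 2 + y ^ 2)) (fun t _ => ?_) (hgc.intervalIntegrable _ _)]
    · simp
    · have hne : t ^ 2 + y ^ 2 ≠ 0 := by positivity
      refine ((hasDerivAt_pow 2 t).div ((hasDerivAt_pow 2 t).add_const (y ^ 2)) hne).congr_deriv ?_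
      simp only [hg]
      push_cast
      ring
  have hlc := lintegral_comp_eq_lintegral_meas_lt_mul μ (f := id) (g := g)
    (ae_nonneg_of_measure_Iio_eq_zero hμ)
    aemeasurable_id (fun t _ => hgc.intervalIntegrable _ _)
    (by
      filter_upwards [self_mem_ae_restrict measurableSet_Ioi] with t ht
      have : (0 : ℝ) < t := ht
      simp only [hg]
      positivity)
  simp only [id, hprim] at hlc
  have htail : stieltjesFun μ y = ∫ t in Ioi (0 : ℝ), tailFun μ t * g t := by
    rw [stieltjesFun, integral_eq_lintegral_of_nonneg_ae
      (Eventually.of_forall fun t => by simp only [Pi.zero_apply]; positivity)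
      (Measurable.aestronglyMeasurable (by fun_prop)), hlc, integral_eq_lintegral_of_nonneg_ae]
    · congr 1
      refine lintegral_congr fun t => ?_
      rw [ENNReal.ofReal_mul (tailFun_nonneg μ t), tailFun,
        ENNReal.ofReal_toReal (measure_ne_top _ _)]
      rfl
    · filter_upwards [self_mem_ae_restrict measurableSet_Ioi] with t ht
      have : (0 : ℝ) < t := ht
      have := tailFun_nonneg μ t
      simp only [hg, Pi.zero_apply]
      positivity
    · exact ((tailFun_antitone μ).measurable.mul hgc.measurable).aestronglyMeasurable
  have hscale := integral_comp_mul_left_Ioi (fun t => tailFun μ t * g t) 0 hy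
  rw [mul_zero] at hscale
  rw [htail, ← smul_inv_smul₀ hy.ne' (∫ t in Ioi (0 : ℝ), tailFun μ t * g t), ← hscale,
    ← integral_smul]
  refine setIntegral_congr_fun measurableSet_Ioi fun v _ => ?_
  simp only [hg, smul_eq_mul]
  have h1 : (y * v) ^ 2 + y ^ 2 = y ^ 2 * (1 + v ^ 2) := by ring
  rw [h1]
  have : (1 + v ^ 2) ≠ 0 := by positivity
  field_simp

end LayerCake

section Abelian

/-- A Potter-type bound for antitone regularly varying functions. -/
lemma RegVarying.exists_rpow_mul_le {f : ℝ → ℝ} {α γ : ℝ} (hf : RegVarying f (-α))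
    (hanti : Antitone f) (hγ0 : 0 ≤ γ) (hγ : α < γ) :
    ∃ M X : ℝ, 0 ≤ M ∧ 0 < X ∧
      ∀ x, X ≤ x → ∀ u, 0 < u → u ≤ x → u ^ γ * f u ≤ M * (x ^ γ * f x) := by
  obtain ⟨hpos, hlim⟩ := hf
  have hlt : ((1 / 2 : ℝ)) ^ (-α) < 2 ^ γ := by
    rw [one_div, Real.inv_rpow two_pos.le, Real.rpow_neg two_pos.le, inv_inv]
    exact Real.rpow_lt_rpow_of_exponent_lt one_lt_two hγ
  obtain ⟨X, hX⟩ := eventually_atTop.1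
    (((hlim (1 / 2) (by norm_num)).eventually (gt_mem_nhds hlt)).and (eventually_gt_atTop 0))
  have hX0 : 0 < X := (hX X le_rfl).2
  have hhalf : ∀ x, X ≤ x → f (1 / 2 * x) ≤ 2 ^ γ * f x := fun x hx =>
    ((div_lt_iff₀ (hpos x (hX x hx).2)).1 (hX x hx).1).le
  set M : ℝ := max (f 0 / f (2 * X)) (2 ^ γ) with hM
  have hM0 : 0 ≤ M := le_max_of_le_right (by positivity)
  have hbase : ∀ x, X ≤ x → x ≤ 2 * X → ∀ u, 0 < u → u ≤ x →
      u ^ γ * f u ≤ M * (x ^ γ * f x) := fun x hx hx2 u hu hux => by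
    have hF := hpos (2 * X) (by positivity)
    have hx0 : 0 < x := hX0.trans_le hx
    have hfx := hpos x hx0
    calc u ^ γ * f u ≤ x ^ γ * f 0 :=
          mul_le_mul (Real.rpow_le_rpow hu.le hux hγ0) (hanti hu.le) (hpos u hu).le
            (by positivity)
      _ = f 0 / f (2 * X) * (x ^ γ * f (2 * X)) := by field_simp
      _ ≤ M * (x ^ γ * f x) := by
          refine mul_le_mul (le_max_left _ _) ?_ (by positivity) hM0
          exact mul_le_mul_of_nonneg_left (hanti hx2) (by positivity)
  have hind : ∀ n : ℕ, ∀ x, X ≤ x → x ≤ 2 ^ (n + 1) * X → ∀ u, 0 < u → u ≤ x →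
      u ^ γ * f u ≤ M * (x ^ γ * f x) := by
    intro n
    induction n with
    | zero => simpa using hbase
    | succ n ih =>
      intro x hx hxn u hu hux
      rcases le_total x (2 * X) with h | h
      · exact hbase x hx h u hu hux
      have hx0 : 0 < x := hX0.trans_le hx
      have hfx := hpos x hx0
      rcases le_total u (1 / 2 * x) with h' | h'
      · refine (ih (1 / 2 * x) (by linarith) (by rw [pow_succ] at hxn; linarith) u hu h').trans ?_
        refine mul_le_mul_of_nonneg_left ?_ hM0
        rw [Real.mul_rpow (by norm_num) hx0.le]
        calc (1 / 2) ^ γ * x ^ γ * f (1 / 2 * x)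
            ≤ (1 / 2) ^ γ * x ^ γ * (2 ^ γ * f x) :=
              mul_le_mul_of_nonneg_left (hhalf x hx) (by positivity)
          _ = ((1 / 2) * 2) ^ γ * (x ^ γ * f x) := by
              rw [Real.mul_rpow (by norm_num) (by norm_num)]; ring
          _ = x ^ γ * f x := by norm_num
      · calc u ^ γ * f u ≤ x ^ γ * (2 ^ γ * f x) :=
              mul_le_mul (Real.rpow_le_rpow hu.le hux hγ0) ((hanti h').trans (hhalf x hx))
                (hpos u hu).le (by positivity)
          _ = 2 ^ γ * (x ^ γ * f x) := by ring
          _ ≤ M * (x ^ γ * f x) :=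
              mul_le_mul_of_nonneg_right (le_max_right _ _) (by positivity)
  refine ⟨M, X, hM0, hX0, fun x hx => ?_⟩
  obtain ⟨n, hn⟩ := pow_unbounded_of_one_lt (x / X) one_lt_two
  refine hind n x hx ?_
  rw [div_lt_iff₀ hX0] at hn
  rw [pow_succ]
  nlinarith

lemma RegVarying.of_tendsto_div {f g : ℝ → ℝ} {r c : ℝ} (hf : RegVarying f r)
    (hg : ∀ x, 0 < x → 0 < g x) (hc : c ≠ 0)
    (h : Tendsto (fun x => g x / f x) atTop (𝓝 c)) : RegVarying g r := by
  refine ⟨hg, fun t ht => ?_⟩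
  have hmul : Tendsto (fun x : ℝ => t * x) atTop atTop := tendsto_id.const_mul_atTop ht
  have := ((h.comp hmul).mul (hf.2 t ht)).div h hc
  rw [mul_div_cancel_left₀ _ hc] at this
  refine this.congr' ?_
  filter_upwards [eventually_gt_atTop 0] with x hx
  have h1 := hf.1 x hx
  have h2 := hf.1 (t * x) (by positivity)
  have h3 := hg x hx
  simp only [Function.comp_apply, Pi.div_apply]
  field_simp

variable (μ : Measure ℝ) [IsFiniteMeasure μ]

lemma tendsto_stieltjesFun_div_tailFun (hμ : μ (Iio 0) = 0) {α : ℝ} (h0 : 0 ≤ α) (h2 : α < 2)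
    (hF : RegVarying (tailFun μ) (-α)) :
    Tendsto (fun y => stieltjesFun μ y / tailFun μ y) atTop
      (𝓝 (if α = 0 then 1 else (Real.pi * α / 2) / Real.sin (Real.pi * α / 2))) := by
  rw [← integral_rpow_neg_mul_kernel h0 h2]
  set γ : ℝ := (α + 2) / 2 with hγ
  obtain ⟨M, X, hM0, hX0, hM⟩ := hF.exists_rpow_mul_le (tailFun_antitone μ) (γ := γ)
    (by linarith) (by linarith)
  have hlim : Tendsto (fun y => ∫ v in Ioi (0 : ℝ),
      tailFun μ (y * v) / tailFun μ y * (2 * v / (1 + v ^ 2) ^ 2)) atTop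
      (𝓝 (∫ v in Ioi (0 : ℝ), v ^ (-α) * (2 * v / (1 + v ^ 2) ^ 2))) := by
    refine tendsto_integral_filter_of_dominated_convergence
      (fun v => M * (v ^ (-γ) * (2 * v / (1 + v ^ 2) ^ 2)) +
        v ^ (-(0 : ℝ)) * (2 * v / (1 + v ^ 2) ^ 2)) ?_ ?_ ?_ ?_
    · refine Eventually.of_forall fun y => Measurable.aestronglyMeasurable ?_
      have := (tailFun_antitone μ).measurable
      fun_prop
    · filter_upwards [eventually_ge_atTop X] with y hy
      filter_upwards [self_mem_ae_restrict measurableSet_Ioi] with v hv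
      have hv : (0 : ℝ) < v := hv
      have hy0 : 0 < y := hX0.trans_le hy
      have hFy := hF.1 y hy0
      have hFyv := hF.1 (y * v) (by positivity)
      have hle : tailFun μ (y * v) / tailFun μ y ≤ M * v ^ (-γ) + 1 := by
        rcases le_total v 1 with h | h
        · have := hM y hy (y * v) (by positivity) (by nlinarith)
          rw [Real.mul_rpow hy0.le hv.le] at this
          have hyγ : 0 < y ^ γ := by positivity
          have hvγ : 0 < v ^ γ := by positivity
          have : tailFun μ (y * v) / tailFun μ y ≤ M * v ^ (-γ) := by
            rw [Real.rpow_neg hv.le, div_le_iff₀ hFy, ← div_eq_mul_inv, div_mul_eq_mul_div,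
              le_div_iff₀ hvγ]
            refine le_of_mul_le_mul_left ?_ hyγ
            linarith
          linarith
        · have : tailFun μ (y * v) / tailFun μ y ≤ 1 :=
            (div_le_one hFy).2 (tailFun_antitone μ (by nlinarith))
          have : 0 ≤ M * v ^ (-γ) := by positivity
          linarith
      rw [Real.norm_of_nonneg (by positivity), neg_zero, Real.rpow_zero, ← mul_assoc, ← add_mul]
      exact mul_le_mul_of_nonneg_right hle (by positivity)
    · exact ((integrableOn_rpow_neg_mul_kernel (by linarith) (by linarith)).const_mul M).add
        (integrableOn_rpow_neg_mul_kernel le_rfl two_pos)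
    · filter_upwards [self_mem_ae_restrict measurableSet_Ioi] with v hv
      have := hF.2 v hv
      simp only [mul_comm v] at this
      exact this.mul_const _
  refine hlim.congr' ?_
  filter_upwards [eventually_gt_atTop 0] with y hy
  rw [stieltjesFun_eq_integral_tailFun μ hμ hy, ← integral_div]
  exact integral_congr_ae (Eventually.of_forall fun v => div_mul_eq_mul_div _ _ _)

lemma integrable_sq_div (y : ℝ) : Integrable (fun t : ℝ => t ^ 2 / (t ^ 2 + y ^ 2)) μ := by
  refine Integrable.of_bound (C := 1) (Measurable.aestronglyMeasurable (by fun_prop))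
    (Eventually.of_forall fun t => ?_)
  rw [Real.norm_of_nonneg (by positivity)]
  exact div_le_one_of_le₀ (by nlinarith [sq_nonneg y]) (by positivity)

lemma stieltjesFun_pos (hF : 0 < tailFun μ 0) (y : ℝ) : 0 < stieltjesFun μ y := by
  rw [stieltjesFun, integral_pos_iff_support_of_nonneg (fun t => by positivity)
    (integrable_sq_div μ y)]
  refine (ENNReal.toReal_pos_iff.1 hF).1.trans_le (measure_mono fun t ht => ?_)
  have : (0 : ℝ) < t := ht
  rw [Function.mem_support]
  positivity

end Abelian

section Weierstrass

/-- The continuous function `w ↦ 1/(1+bw)` on `[0,1]`. -/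
def resolventMap (b : ℝ) (hb : 0 ≤ b) : C(Icc (0 : ℝ) 1, ℝ) where
  toFun w := 1 / (1 + b * w)
  continuous_toFun := Continuous.div (by fun_prop) (by fun_prop) fun w => by
    have := mul_nonneg hb w.2.1
    positivity

/-- The continuous functions whose images under a net of linear functionals form a Cauchy net. -/
def cauchySubmodule (Φ : ℝ → C(Icc (0 : ℝ) 1, ℝ) →ₗ[ℝ] ℝ) : Submodule ℝ C(Icc (0 : ℝ) 1, ℝ) where
  carrier := {h | CauchySeq fun y => Φ y h}
  add_mem' {f g} hf hg := by
    obtain ⟨l, hl⟩ := cauchySeq_tendsto_of_complete hf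
    obtain ⟨m, hm⟩ := cauchySeq_tendsto_of_complete hg
    simpa using (hl.add hm).cauchySeq
  zero_mem' := by simpa using (tendsto_const_nhds (x := (0 : ℝ))).cauchySeq
  smul_mem' c f hf := by
    obtain ⟨l, hl⟩ := cauchySeq_tendsto_of_complete hf
    simpa using (hl.const_mul c).cauchySeq

variable {Φ : ℝ → C(Icc (0 : ℝ) 1, ℝ) →ₗ[ℝ] ℝ}

lemma mem_cauchySubmodule_of_approx (hΦ : ∀ᶠ y in atTop, ∀ h, |Φ y h| ≤ ‖h‖)
    {h : C(Icc (0 : ℝ) 1, ℝ)} (happ : ∀ ε > 0, ∃ g ∈ cauchySubmodule Φ, ‖g - h‖ < ε) :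
    h ∈ cauchySubmodule Φ := by
  change CauchySeq fun y => Φ y h
  rw [Metric.cauchySeq_iff']
  intro ε hε
  obtain ⟨g, hg, hgh⟩ := happ (ε / 3) (by positivity)
  obtain ⟨Y, hY⟩ := eventually_atTop.1 hΦ
  obtain ⟨N, hN⟩ := Metric.cauchySeq_iff.1 hg (ε / 3) (by positivity)
  have hclose : ∀ y, Y ≤ y → |Φ y g - Φ y h| < ε / 3 := fun y hy => by
    rw [← map_sub]
    exact (hY y hy _).trans_lt hgh
  refine ⟨max Y N, fun y hy => ?_⟩
  have h1 := hclose y ((le_max_left _ _).trans hy)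
  have h2 := hclose _ (le_max_left Y N)
  have h3 := hN y ((le_max_right _ _).trans hy) _ (le_max_right Y N)
  rw [Real.dist_eq, abs_lt] at *
  constructor <;> linarith

lemma pow_id_mem_cauchySubmodule (hΦ : ∀ᶠ y in atTop, ∀ h, |Φ y h| ≤ ‖h‖)
    (hres : ∀ b (hb : 0 ≤ b), resolventMap b hb ∈ cauchySubmodule Φ) (k : ℕ) :
    (⟨fun w => (w : ℝ), by fun_prop⟩ : C(Icc (0 : ℝ) 1, ℝ)) ^ k ∈ cauchySubmodule Φ := by
  set X : C(Icc (0 : ℝ) 1, ℝ) := ⟨fun w => (w : ℝ), by fun_prop⟩ with hX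
  induction k using Nat.strong_induction_on with
  | _ k ih =>
    refine mem_cauchySubmodule_of_approx hΦ fun ε hε => ?_
    set b : ℝ := ε / 2 with hb
    have hb0 : 0 < b := by positivity
    refine ⟨((-b) ^ k)⁻¹ • (resolventMap b hb0.le - ∑ j ∈ Finset.range k, (-b) ^ j • X ^ j),
      Submodule.smul_mem _ _ (Submodule.sub_mem _ (hres b hb0.le)
        (Submodule.sum_mem _ fun j hj => Submodule.smul_mem _ _ (ih j (Finset.mem_range.1 hj)))),
      ?_⟩
    refine lt_of_le_of_lt (b := b) ?_ (by linarith)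
    rw [ContinuousMap.norm_le _ hb0.le]
    intro w
    obtain ⟨hw0, hw1⟩ := w.2
    have hbw := mul_nonneg hb0.le hw0
    have hden : 0 < 1 + b * (w : ℝ) := by positivity
    have hgeom : ∑ j ∈ Finset.range k, (-b) ^ j * (w : ℝ) ^ j =
        (1 - (-b) ^ k * (w : ℝ) ^ k) / (1 + b * w) := by
      rw [eq_div_iff hden.ne']
      have := geom_sum_mul_neg (-b * (w : ℝ)) k
      simp only [mul_pow] at this
      rw [← this]
      ring
    have hval : (((-b) ^ k)⁻¹ • (resolventMap b hb0.le -
        ∑ j ∈ Finset.range k, (-b) ^ j • X ^ j) - X ^ k) w =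
        -((w : ℝ) ^ k * (b * w / (1 + b * w))) := by
      have hbk : (-b) ^ k ≠ 0 := pow_ne_zero _ (neg_ne_zero.2 hb0.ne')
      simp only [ContinuousMap.sub_apply, ContinuousMap.smul_apply, ContinuousMap.sum_apply,
        ContinuousMap.pow_apply, smul_eq_mul, hX, resolventMap, ContinuousMap.coe_mk]
      rw [hgeom]
      field_simp
      ring
    rw [hval, norm_neg, Real.norm_of_nonneg (by positivity)]
    calc (w : ℝ) ^ k * (b * w / (1 + b * w)) ≤ 1 * (b * 1 / 1) := by
          gcongr
          · exact pow_le_one₀ hw0 hw1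
          · linarith
      _ = b := by ring

lemma cauchySeq_of_resolventMap (hΦ : ∀ᶠ y in atTop, ∀ h, |Φ y h| ≤ ‖h‖)
    (hres : ∀ b (hb : 0 ≤ b), CauchySeq fun y => Φ y (resolventMap b hb))
    (h : C(Icc (0 : ℝ) 1, ℝ)) : CauchySeq fun y => Φ y h := by
  refine mem_cauchySubmodule_of_approx hΦ fun ε hε => ?_
  obtain ⟨p, hp⟩ := exists_polynomial_near_continuousMap 0 1 h ε hε
  refine ⟨_, ?_, hp⟩
  have : p.toContinuousMapOn (Icc (0 : ℝ) 1) = ∑ i ∈ Finset.range (p.natDegree + 1),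
      p.coeff i • (⟨fun w => (w : ℝ), by fun_prop⟩ : C(Icc (0 : ℝ) 1, ℝ)) ^ i := by
    ext w
    simp [Polynomial.eval_eq_sum_range, ContinuousMap.sum_apply]
  rw [this]
  exact Submodule.sum_mem _ fun i _ =>
    Submodule.smul_mem _ _ (pow_id_mem_cauchySubmodule hΦ hres i)

end Weierstrass

section Tauberian

/-- The change of variables `t ↦ y²/(t²+y²)` onto `[0,1]`. -/
def compactify (y t : ℝ) : Icc (0 : ℝ) 1 :=
  ⟨y ^ 2 / (t ^ 2 + y ^ 2), by positivity,
    div_le_one_of_le₀ (by nlinarith [sq_nonneg t]) (by positivity)⟩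

lemma measurable_compactify (y : ℝ) : Measurable (compactify y) :=
  Measurable.subtype_mk (by fun_prop)

lemma integral_indicator_Ioi (μ : Measure ℝ) (y : ℝ) :
    ∫ t, (Ioi y).indicator (1 : ℝ → ℝ) t ∂μ = tailFun μ y :=
  integral_indicator_one measurableSet_Ioi

variable (μ : Measure ℝ) [IsFiniteMeasure μ]

lemma integrable_compactify (h : C(Icc (0 : ℝ) 1, ℝ)) (y : ℝ) :
    Integrable (fun t => h (compactify y t) * (t ^ 2 / (t ^ 2 + y ^ 2))) μ :=
  (integrable_sq_div μ y).bdd_mul (c := ‖h‖)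
    (h.continuous.measurable.comp (measurable_compactify y)).aestronglyMeasurable
    (Eventually.of_forall fun _ => h.norm_coe_le_norm _)

/-- The normalised functionals whose convergence encodes the Tauberian theorem. -/
def tauberFunctional (y : ℝ) : C(Icc (0 : ℝ) 1, ℝ) →ₗ[ℝ] ℝ where
  toFun h := (∫ t, h (compactify y t) * (t ^ 2 / (t ^ 2 + y ^ 2)) ∂μ) / stieltjesFun μ y
  map_add' f g := by
    simp only [ContinuousMap.add_apply, add_mul]
    rw [integral_add (integrable_compactify μ f y) (integrable_compactify μ g y), add_div]
  map_smul' c f := by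
    simp only [ContinuousMap.smul_apply, smul_eq_mul, mul_assoc, RingHom.id_apply]
    rw [integral_const_mul, mul_div_assoc]

lemma abs_tauberFunctional_le {y : ℝ} (hy : 0 < stieltjesFun μ y) (h : C(Icc (0 : ℝ) 1, ℝ)) :
    |tauberFunctional μ y h| ≤ ‖h‖ := by
  change |(_ : ℝ) / _| ≤ _
  rw [abs_div, abs_of_pos hy, div_le_iff₀ hy, stieltjesFun, ← integral_const_mul,
    ← Real.norm_eq_abs]
  refine norm_integral_le_of_norm_le ((integrable_sq_div μ y).const_mul _)
    (Eventually.of_forall fun t => ?_)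
  rw [norm_mul, Real.norm_of_nonneg (show 0 ≤ t ^ 2 / (t ^ 2 + y ^ 2) by positivity)]
  exact mul_le_mul_of_nonneg_right (h.norm_coe_le_norm _) (by positivity)

lemma exists_tendsto_tauberFunctional {r : ℝ} (hG : RegVarying (stieltjesFun μ) r)
    (h : C(Icc (0 : ℝ) 1, ℝ)) :
    ∃ l, Tendsto (fun y => tauberFunctional μ y h) atTop (𝓝 l) := by
  refine cauchySeq_tendsto_of_complete (cauchySeq_of_resolventMap ?_ (fun b hb => ?_) h)
  · filter_upwards [eventually_gt_atTop 0] with y hy h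
    exact abs_tauberFunctional_le μ (hG.1 y hy) h
  · refine ((hG.2 (√(1 + b)) (by positivity)).congr' ?_).cauchySeq
    filter_upwards [eventually_gt_atTop 0] with y hy
    change _ = (_ : ℝ) / _
    congr 1
    refine integral_congr_ae (Eventually.of_forall fun t => ?_)
    simp only [resolventMap, compactify, ContinuousMap.coe_mk]
    rw [mul_pow, Real.sq_sqrt (by positivity)]
    have h1 : 0 < t ^ 2 + y ^ 2 := by positivity
    have h2 : 0 < t ^ 2 + y ^ 2 + b * y ^ 2 := by positivity
    have h3 : t ^ 2 + (1 + b) * y ^ 2 = t ^ 2 + y ^ 2 + b * y ^ 2 := by ring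
    have h4 : 1 + b * (y ^ 2 / (t ^ 2 + y ^ 2)) =
      (t ^ 2 + y ^ 2 + b * y ^ 2) / (t ^ 2 + y ^ 2) := by field_simp
    rw [h3, h4]
    field_simp

lemma integrable_indicator_Ioi (y : ℝ) : Integrable ((Ioi y).indicator (1 : ℝ → ℝ)) μ :=
  (integrable_const (1 : ℝ)).indicator measurableSet_Ioi

lemma stieltjesFun_two_mul_le (hμ : μ (Iio 0) = 0) {s y : ℝ} (hs : 0 < s) (hy : 0 < y) :
    stieltjesFun μ (2 * y) ≤
      tailFun μ (s * y) + (s ^ 2 + 1) / (s ^ 2 + 4) * stieltjesFun μ y := by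
  rw [← integral_indicator_Ioi, stieltjesFun, stieltjesFun, ← integral_const_mul, ← integral_add
    (integrable_indicator_Ioi μ _) ((integrable_sq_div μ y).const_mul _)]
  refine integral_mono_ae (integrable_sq_div μ _)
    ((integrable_indicator_Ioi μ _).add ((integrable_sq_div μ y).const_mul _)) ?_
  filter_upwards [ae_nonneg_of_measure_Iio_eq_zero hμ] with t ht
  by_cases hts : t ∈ Ioi (s * y)
  · have h1 : t ^ 2 / (t ^ 2 + (2 * y) ^ 2) ≤ 1 :=
      div_le_one_of_le₀ (by nlinarith [sq_nonneg y]) (by positivity)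
    have h2 : 0 ≤ (s ^ 2 + 1) / (s ^ 2 + 4) * (t ^ 2 / (t ^ 2 + y ^ 2)) := by positivity
    simp only [indicator_of_mem hts, Pi.one_apply]
    linarith
  · simp only [indicator_of_notMem hts, zero_add]
    have hts : t ≤ s * y := not_lt.1 hts
    rw [div_mul_div_comm, div_le_div_iff₀ (by positivity) (by positivity)]
    have hsq : t ^ 2 ≤ s ^ 2 * y ^ 2 := by
      rw [← mul_pow]
      exact pow_le_pow_left₀ ht hts 2
    nlinarith [mul_nonneg (sq_nonneg t) (sub_nonneg.2 hsq)]

lemma not_forall_tendsto_tailFun_div_stieltjesFun (hμ : μ (Iio 0) = 0) {α : ℝ} (h2 : α < 2)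
    (hG : RegVarying (stieltjesFun μ) (-α)) :
    ¬ ∀ s > 0, Tendsto (fun y => tailFun μ (s * y) / stieltjesFun μ y) atTop (𝓝 0) := by
  intro h
  have hs : ∀ s : ℝ, 0 < s → (2 : ℝ) ^ (-α) ≤ (s ^ 2 + 1) / (s ^ 2 + 4) := fun s hs => by
    refine le_of_tendsto_of_tendsto (hG.2 2 two_pos)
      (by simpa using (h s hs).add_const ((s ^ 2 + 1) / (s ^ 2 + 4))) ?_
    filter_upwards [eventually_gt_atTop 0] with y hy
    have hGy := hG.1 y hy
    rw [div_le_iff₀ hGy, add_mul, div_mul_cancel₀ _ hGy.ne']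
    exact stieltjesFun_two_mul_le μ hμ hs hy
  have hlim : Tendsto (fun s : ℝ => (s ^ 2 + 1) / (s ^ 2 + 4)) (𝓝[>] 0) (𝓝 (1 / 4)) := by
    have : ContinuousAt (fun s : ℝ => (s ^ 2 + 1) / (s ^ 2 + 4)) 0 :=
      ContinuousAt.div (by fun_prop) (by fun_prop) (by norm_num)
    simpa [ContinuousAt] using this.tendsto.mono_left nhdsWithin_le_nhds
  have hle : (2 : ℝ) ^ (-α) ≤ 1 / 4 :=
    ge_of_tendsto hlim (by filter_upwards [self_mem_nhdsWithin] with s h using hs s h)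
  have hlt : (2 : ℝ) ^ (-2 : ℝ) < 2 ^ (-α) :=
    Real.rpow_lt_rpow_of_exponent_lt one_lt_two (by linarith)
  have : (2 : ℝ) ^ (-2 : ℝ) = 1 / 4 := by
    rw [Real.rpow_neg two_pos.le, Real.rpow_two]; norm_num
  rw [this] at hlt
  exact hle.not_gt hlt

lemma tailFun_pos_of_regVarying_stieltjesFun (hμ : μ (Iio 0) = 0) {α : ℝ} (h2 : α < 2)
    (hG : RegVarying (stieltjesFun μ) (-α)) (x : ℝ) : 0 < tailFun μ x := by
  by_contra hx
  refine not_forall_tendsto_tailFun_div_stieltjesFun μ hμ h2 hG fun s hs => ?_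
  refine tendsto_const_nhds.congr' ?_
  filter_upwards [(tendsto_id.const_mul_atTop hs).eventually_ge_atTop x] with y hy
  have : tailFun μ (s * y) = 0 :=
    le_antisymm ((tailFun_antitone μ hy).trans (not_lt.1 hx)) (tailFun_nonneg μ _)
  rw [this, zero_div]

lemma exists_cutoff {a : ℝ} (ha0 : 0 < a) (ha1 : a < 1) : ∃ h : C(Icc (0 : ℝ) 1, ℝ),
    ∀ y t : ℝ, 0 < y → 0 ≤ t →
      (Ioi y).indicator 1 t ≤ h (compactify y t) * (t ^ 2 / (t ^ 2 + y ^ 2)) ∧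
        h (compactify y t) * (t ^ 2 / (t ^ 2 + y ^ 2)) ≤ (Ioi (a * y)).indicator 1 t := by
  set c : ℝ := 1 / (1 + a ^ 2) with hc
  have ha2 : a ^ 2 < 1 := by nlinarith
  have hc1 : c < 1 := by
    rw [hc, div_lt_one (by positivity)]
    nlinarith [sq_pos_of_pos ha0]
  have hc2 : 1 / 2 < c := one_div_lt_one_div_of_lt (by positivity) (by linarith)
  refine ⟨⟨fun w => max 0 (min 1 ((c - w) / (c - 1 / 2))) / max (1 - (w : ℝ)) (1 - c),
    Continuous.div (by fun_prop) (by fun_prop) fun w =>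
      (lt_max_of_lt_right (by linarith)).ne'⟩, fun y t hy ht => ?_⟩
  simp only [ContinuousMap.coe_mk, compactify]
  set w : ℝ := y ^ 2 / (t ^ 2 + y ^ 2) with hw
  have hpos : 0 < t ^ 2 + y ^ 2 := by positivity
  have hw' : t ^ 2 / (t ^ 2 + y ^ 2) = 1 - w := by rw [hw]; field_simp; ring
  rw [hw']
  have hd : 0 < c - 1 / 2 := by linarith
  have hw1 : 0 ≤ 1 - w := by rw [← hw']; positivity
  rcases lt_or_ge w c with hwc | hwc
  · have hm : max (1 - w) (1 - c) = 1 - w := max_eq_left (by linarith)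
    have hta : a * y < t := by
      rw [hw, hc, div_lt_div_iff₀ hpos (by positivity)] at hwc
      refine lt_of_pow_lt_pow_left₀ 2 ht ?_
      nlinarith
    rw [hm, div_mul_cancel₀ _ (by linarith), indicator_of_mem (show t ∈ Ioi (a * y) from hta)]
    refine ⟨?_, by simp⟩
    by_cases hty : t ∈ Ioi y
    · have hty' : y < t := hty
      have : w ≤ 1 / 2 := by
        rw [hw, div_le_div_iff₀ hpos two_pos]
        nlinarith
      rw [indicator_of_mem hty, min_eq_left ((one_le_div hd).2 (by linarith))]
      simp
    · rw [indicator_of_notMem hty]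
      exact le_max_left _ _
  · have hle : (c - w) / (c - 1 / 2) ≤ 0 := div_nonpos_of_nonpos_of_nonneg (by linarith) hd.le
    rw [max_eq_left ((min_le_right _ _).trans hle), zero_div, zero_mul]
    refine ⟨?_, indicator_nonneg (fun _ _ => zero_le_one) _⟩
    have hty : t ∉ Ioi y := fun hty => by
      have hty' : y < t := hty
      rw [hw, hc, div_le_div_iff₀ (by positivity) hpos] at hwc
      nlinarith [mul_lt_mul_of_pos_right ha2 (sq_pos_of_pos hy)]
    rw [indicator_of_notMem hty]

lemma exists_regVarying_between (hμ : μ (Iio 0) = 0) {α : ℝ} (h2 : α < 2)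
    (hG : RegVarying (stieltjesFun μ) (-α)) {a : ℝ} (ha0 : 0 < a) (ha1 : a < 1) :
    ∃ K : ℝ → ℝ, RegVarying K (-α) ∧
      ∀ y, 0 < y → tailFun μ y ≤ K y ∧ K y ≤ tailFun μ (a * y) := by
  obtain ⟨h, hh⟩ := exists_cutoff ha0 ha1
  set K : ℝ → ℝ := fun y => ∫ t, h (compactify y t) * (t ^ 2 / (t ^ 2 + y ^ 2)) ∂μ with hK
  have hKF : ∀ y, 0 < y → tailFun μ y ≤ K y ∧ K y ≤ tailFun μ (a * y) := fun y hy => by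
    rw [← integral_indicator_Ioi, ← integral_indicator_Ioi]
    constructor
    · refine integral_mono_ae (integrable_indicator_Ioi μ _) (integrable_compactify μ h y) ?_
      filter_upwards [ae_nonneg_of_measure_Iio_eq_zero hμ] with t ht using (hh y t hy ht).1
    · refine integral_mono_ae (integrable_compactify μ h y) (integrable_indicator_Ioi μ _) ?_
      filter_upwards [ae_nonneg_of_measure_Iio_eq_zero hμ] with t ht using (hh y t hy ht).2
  obtain ⟨l, hl⟩ := exists_tendsto_tauberFunctional μ hG h
  have hl : Tendsto (fun y => K y / stieltjesFun μ y) atTop (𝓝 l) := hl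
  refine ⟨K, hG.of_tendsto_div (fun x hx => ?_) (fun hl0 => ?_) hl, hKF⟩
  · exact (tailFun_pos_of_regVarying_stieltjesFun μ hμ h2 hG x).trans_le (hKF x hx).1
  · refine not_forall_tendsto_tailFun_div_stieltjesFun μ hμ h2 hG fun s hs => ?_
    have hlim := (hl.comp (tendsto_id.const_mul_atTop hs)).mul (hG.2 s hs)
    rw [hl0, zero_mul] at hlim
    refine tendsto_of_tendsto_of_tendsto_of_le_of_le' tendsto_const_nhds hlim ?_ ?_
    · filter_upwards [eventually_gt_atTop 0] with y hy
      exact div_nonneg (tailFun_nonneg μ _) (hG.1 y hy).le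
    · filter_upwards [eventually_gt_atTop 0] with y hy
      have h1 := hG.1 y hy
      have h2 := hG.1 (s * y) (by positivity)
      simp only [Function.comp_apply, id]
      rw [div_mul_div_cancel₀ h2.ne']
      exact div_le_div_of_nonneg_right (hKF (s * y) (by positivity)).1 h1.le

lemma regVarying_tailFun_of_stieltjesFun (hμ : μ (Iio 0) = 0) {α : ℝ} (h2 : α < 2)
    (hG : RegVarying (stieltjesFun μ) (-α)) : RegVarying (tailFun μ) (-α) := by
  have hpos := tailFun_pos_of_regVarying_stieltjesFun μ hμ h2 hG
  refine ⟨fun x _ => hpos x, fun t ht => ?_⟩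
  have hcut : ∀ p : ℝ → Prop, (∀ᶠ a in 𝓝 1, p a) → ∃ a, 0 < a ∧ a < 1 ∧ p a := fun p hp => by
    have h1 : ∀ᶠ a : ℝ in 𝓝[<] 1, 0 < a := nhdsWithin_le_nhds (lt_mem_nhds one_pos)
    obtain ⟨a, ha, ha', hpa⟩ := (h1.and (eventually_mem_nhdsWithin.and (nhdsWithin_le_nhds hp))).exists
    exact ⟨a, ha, ha', hpa⟩
  have hK0 : ∀ (a : ℝ) (K : ℝ → ℝ), 0 < a → (∀ y, 0 < y → tailFun μ y ≤ K y ∧ K y ≤ tailFun μ (a * y)) →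
      ∀ y, 0 < y → K (y / a) ≤ tailFun μ y := fun a K ha hK y hy => by
    have := (hK (y / a) (by positivity)).2
    rwa [mul_div_cancel₀ _ ha.ne'] at this
  refine tendsto_order.2 ⟨fun c hc => ?_, fun c hc => ?_⟩
  · have hcont : ContinuousAt (fun a : ℝ => (t / a) ^ (-α)) 1 :=
      ContinuousAt.rpow_const (continuousAt_const.div continuousAt_id one_ne_zero)
        (Or.inl (by simpa using ht.ne'))
    obtain ⟨a, ha0, ha1, hca⟩ := hcut _ (hcont.eventually (lt_mem_nhds (by simpa using hc)))
    obtain ⟨K, hKrv, hK⟩ := exists_regVarying_between μ hμ h2 hG ha0 ha1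
    filter_upwards [(hKrv.2 (t / a) (by positivity)).eventually (lt_mem_nhds hca),
      eventually_gt_atTop 0] with y hy hy0
    refine hy.trans_le (div_le_div₀ (tailFun_nonneg μ _) ?_ (hpos y) (hK y hy0).1)
    rw [div_mul_eq_mul_div]
    exact hK0 a K ha0 hK _ (by positivity)
  · have hcont : ContinuousAt (fun a : ℝ => (a * t) ^ (-α)) 1 :=
      ContinuousAt.rpow_const (continuousAt_id.mul continuousAt_const)
        (Or.inl (by simpa using ht.ne'))
    obtain ⟨a, ha0, ha1, hca⟩ := hcut _ (hcont.eventually (gt_mem_nhds (by simpa using hc)))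
    obtain ⟨K, hKrv, hK⟩ := exists_regVarying_between μ hμ h2 hG ha0 ha1
    have hdiv : Tendsto (fun y : ℝ => y / a) atTop atTop := tendsto_id.atTop_div_const ha0
    filter_upwards [hdiv.eventually ((hKrv.2 (a * t) (by positivity)).eventually
      (gt_mem_nhds hca)), eventually_gt_atTop 0] with y hy hy0
    rw [show a * t * (y / a) = t * y by field_simp] at hy
    refine lt_of_le_of_lt ?_ hy
    have hKpos := hKrv.1 (y / a) (by positivity)
    have hKt := hKrv.1 (t * y) (by positivity)
    exact div_le_div₀ hKt.le (hK _ (by positivity)).1 hKpos (hK0 a K ha0 hK y hy0)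

end Tauberian

/-- Proposition (Karamata-type, Stieltjes variant): for a finite positive Borel measure
`ρ` on `[0,∞)` and `α ∈ [0,2)`, the tail `y ↦ ρ((y,∞))` is regularly varying of index
`-α` iff `y ↦ ∫₀^∞ t²/(t²+y²) dρ(t)` is regularly varying of index `-α`; and in that case
`∫₀^∞ t²/(t²+y²) dρ(t) ~ c_α·ρ((y,∞))` as `y → ∞`, where
`c_α = (πα/2)/sin(πα/2)` for `α ∈ (0,2)` and `c₀ = 1`. -/
theorem stmt14 (ρm : Measure ℝ) [IsFiniteMeasure ρm] (hsupp : ρm (Set.Iio 0) = 0)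
    (α : ℝ) (hα0 : 0 ≤ α) (hα2 : α < 2) :
    (RegVarying (fun y : ℝ => (ρm (Set.Ioi y)).toReal) (-α) ↔
      RegVarying (fun y : ℝ => ∫ t : ℝ, t ^ 2 / (t ^ 2 + y ^ 2) ∂ρm) (-α)) ∧
    (RegVarying (fun y : ℝ => (ρm (Set.Ioi y)).toReal) (-α) →
      Tendsto (fun y : ℝ =>
          (∫ t : ℝ, t ^ 2 / (t ^ 2 + y ^ 2) ∂ρm) /
            ((if α = 0 then 1 else (Real.pi * α / 2) / Real.sin (Real.pi * α / 2)) *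
              (ρm (Set.Ioi y)).toReal))
        atTop (nhds 1)) := by
  have hposc := integral_rpow_neg_mul_kernel_pos hα0 hα2
  have hlim : RegVarying (tailFun ρm) (-α) → _ :=
    tendsto_stieltjesFun_div_tailFun ρm hsupp hα0 hα2
  refine ⟨⟨fun hF => ?_, regVarying_tailFun_of_stieltjesFun ρm hsupp hα2⟩, fun hF => ?_⟩
  · have hF0 : 0 < tailFun ρm 0 := (hF.1 1 one_pos).trans_le (tailFun_antitone ρm zero_le_one)
    exact hF.of_tendsto_div (fun x _ => stieltjesFun_pos ρm hF0 x) hposc.ne' (hlim hF)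
  · have h := (hlim hF).div_const
      (if α = 0 then 1 else (Real.pi * α / 2) / Real.sin (Real.pi * α / 2))
    rw [div_self hposc.ne'] at h
    refine h.congr fun y => ?_
    rw [div_div, mul_comm]
    rfl
end
end

section
/- Let p be a nonnegative integer and μ a probability measure in M_p. (a) If y↦μ((y,∞)) is regularly varying of index −p, then for every ε>0, y^{ε}·|Re r_G(iy)| → ∞ as y→∞; if moreover p=0, then Re r_G(iy) ~ −μ((y,∞)) as y→∞. (b) If y↦μ((y,∞)) is regularly varying of index −(p+1), then y↦−Im r_G(iy) is regularly varying of index −1, and for every ε>0, y·|Im r_G(iy)| → ∞ and y^{1−ε}·Im r_G(iy) → 0 as y→∞. -/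
open MeasureTheory Filter Topology
open scoped ENNReal

noncomputable section

/-- A function that does not increase under doubling of the argument is bounded by its values
on one dyadic block. -/
lemma le_of_doubling {g : ℝ → ℝ} {X C : ℝ} (hX : 0 < X) (h : ∀ x, X ≤ x → g (2 * x) ≤ g x)
    (hC : ∀ x, X ≤ x → x ≤ 2 * X → g x ≤ C) : ∀ x, X ≤ x → g x ≤ C := by
  have key : ∀ n : ℕ, ∀ x, X ≤ x → x ≤ 2 ^ n * X → g x ≤ C := by
    intro n
    induction n with
    | zero => intro x h1 h2; exact hC x h1 (by linarith)
    | succ n ih =>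
      intro x h1 h2
      rcases le_total x (2 * X) with h3 | h3
      · exact hC x h1 h3
      · have h4 := h (x / 2) (by linarith)
        rw [mul_div_cancel₀ x two_ne_zero] at h4
        exact h4.trans (ih (x / 2) (by linarith) (by rw [pow_succ] at h2; linarith))
  intro x hx
  obtain ⟨n, hn⟩ := pow_unbounded_of_one_lt (x / X) (one_lt_two : (1 : ℝ) < 2)
  exact key n x hx ((div_le_iff₀ hX).1 hn.le)

lemma tendsto_div_rpow_of_doubling {f : ℝ → ℝ} {ρ δ : ℝ} (hpos : ∀ x, 0 < x → 0 < f x)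
    (hmono : MonotoneOn f (Set.Ioi 0))
    (hlim : Tendsto (fun x => f (2 * x) / f x) atTop (𝓝 ((2 : ℝ) ^ ρ)))
    (hρ : 0 ≤ ρ) (hδ : ρ < δ) : Tendsto (fun x => f x / x ^ δ) atTop (𝓝 0) := by
  obtain ⟨σ, h1, h2⟩ := exists_between hδ
  have hlt : (2 : ℝ) ^ ρ < 2 ^ σ := Real.rpow_lt_rpow_of_exponent_lt one_lt_two h1
  obtain ⟨X, hX⟩ := eventually_atTop.1
    ((hlim.eventually (gt_mem_nhds hlt)).and (eventually_ge_atTop 1))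
  have hX1 : 1 ≤ X := (hX X le_rfl).2
  have hX0 : 0 < X := by linarith
  have hb : ∀ x, X ≤ x → f x / x ^ σ ≤ f (2 * X) := by
    apply le_of_doubling hX0
    · intro x hx
      have hx0 : 0 < x := by linarith
      have := (div_lt_iff₀ (hpos x hx0)).1 (hX x hx).1
      rw [Real.mul_rpow two_pos.le hx0.le, div_le_div_iff₀ (by positivity) (by positivity)]
      calc f (2 * x) * x ^ σ ≤ (2 ^ σ * f x) * x ^ σ := by gcongr
        _ = f x * (2 ^ σ * x ^ σ) := by ring
    · intro x hx hx2
      have hx0 : 0 < x := by linarith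
      refine (div_le_self (hpos x hx0).le ?_).trans
        (hmono hx0 (show 0 < 2 * X by linarith) hx2)
      exact Real.one_le_rpow (by linarith) (by linarith)
  have hz : Tendsto (fun x : ℝ => f (2 * X) * x ^ (-(δ - σ))) atTop (𝓝 0) := by
    simpa using (tendsto_rpow_neg_atTop (sub_pos.2 h2)).const_mul (f (2 * X))
  refine squeeze_zero' ?_ ?_ hz
  · filter_upwards [eventually_gt_atTop 0] with x hx
    exact (div_pos (hpos x hx) (Real.rpow_pos_of_pos hx _)).le
  · filter_upwards [eventually_ge_atTop X] with x hx
    have hx0 : 0 < x := by linarith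
    have : f x / x ^ δ = f x / x ^ σ * x ^ (-(δ - σ)) := by
      rw [div_mul_eq_mul_div, div_eq_div_iff (by positivity) (by positivity), mul_assoc,
        ← Real.rpow_add hx0]
      congr 2
      ring
    rw [this]
    gcongr
    exact hb x hx

/-- The reciprocal of a regularly varying tail is dominated by larger powers. -/
lemma tendsto_rpow_mul_tail {μ : Measure ℝ} [IsFiniteMeasure μ] {ρ δ : ℝ} (hρ : 0 ≤ ρ)
    (hδ : ρ < δ) (h : RegVarying (fun y : ℝ => μ.real (Set.Ioi y)) (-ρ)) :
    Tendsto (fun x : ℝ => x ^ δ * μ.real (Set.Ioi x)) atTop atTop := by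
  obtain ⟨hpos, hlim⟩ := h
  have h1 := tendsto_div_rpow_of_doubling (f := fun y : ℝ => (μ.real (Set.Ioi y))⁻¹)
    (fun x hx => inv_pos.2 (hpos x hx)) (fun x hx y hy hxy => by
      refine inv_anti₀ (hpos y hy) (ENNReal.toReal_mono (measure_ne_top _ _) ?_)
      exact measure_mono (Set.Ioi_subset_Ioi hxy))
    (ρ := ρ) (by
      have := (hlim 2 two_pos).inv₀ (by positivity)
      rw [Real.rpow_neg two_pos.le, inv_inv] at this
      refine this.congr fun x => ?_
      rw [inv_div, div_eq_mul_inv, div_eq_mul_inv, inv_inv, mul_comm]) hρ hδ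
  have h2 : Tendsto (fun x : ℝ => (μ.real (Set.Ioi x))⁻¹ / x ^ δ) atTop (𝓝[>] 0) := by
    refine tendsto_nhdsWithin_iff.2 ⟨h1, ?_⟩
    filter_upwards [eventually_gt_atTop 0] with x hx
    exact div_pos (inv_pos.2 (hpos x hx)) (Real.rpow_pos_of_pos hx _)
  refine h2.inv_tendsto_nhdsGT_zero.congr fun x => ?_
  simp [div_eq_mul_inv, mul_comm]

section Remainder

variable {μ : Measure ℝ} {p : ℕ}

lemma ae_nonneg_of_Iio (h : μ (Set.Iio 0) = 0) : ∀ᵐ t ∂μ, 0 ≤ t := by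
  rw [ae_iff]; convert h using 2; ext t; simp

lemma integrable_pow_of_lintegral (h0 : ∀ᵐ t ∂μ, (0 : ℝ) ≤ t)
    (h : (∫⁻ t, ENNReal.ofReal (t ^ p) ∂μ) ≠ ⊤) : Integrable (fun t : ℝ => t ^ p) μ :=
  (lintegral_ofReal_ne_top_iff_integrable (by fun_prop)
    (h0.mono fun t ht => pow_nonneg ht p)).1 h

lemma integrable_re_kernel (hi : Integrable (fun t : ℝ => t ^ p) μ) {y : ℝ} (hy : 0 < y) :
    Integrable (fun t : ℝ => t ^ (p + 2) / (t ^ 2 + y ^ 2)) μ := by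
  refine hi.norm.mono' (Measurable.aestronglyMeasurable (by fun_prop)) (ae_of_all _ fun t => ?_)
  have h : 0 < t ^ 2 + y ^ 2 := by positivity
  rw [norm_div, Real.norm_of_nonneg h.le, div_le_iff₀ h, pow_add, norm_mul, norm_pow, norm_pow,
    Real.norm_eq_abs, sq_abs]
  gcongr
  nlinarith [sq_nonneg y]

lemma integrable_im_kernel (hi : Integrable (fun t : ℝ => t ^ p) μ) {y : ℝ} (hy : 0 < y) :
    Integrable (fun t : ℝ => t ^ (p + 1) * y ^ 2 / (t ^ 2 + y ^ 2)) μ := by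
  refine (hi.norm.mul_const y).mono' (Measurable.aestronglyMeasurable (by fun_prop))
    (ae_of_all _ fun t => ?_)
  have h : 0 < t ^ 2 + y ^ 2 := by positivity
  rw [norm_div, Real.norm_of_nonneg h.le, div_le_iff₀ h, pow_succ, norm_mul, norm_mul, norm_pow,
    norm_pow, Real.norm_eq_abs, Real.norm_eq_abs, sq_abs, mul_assoc, mul_assoc]
  refine mul_le_mul_of_nonneg_left ?_ (by positivity)
  rw [← sq_abs t]
  nlinarith [mul_nonneg hy.le (sq_nonneg (|t| - y)),
    mul_nonneg hy.le (mul_nonneg hy.le (abs_nonneg t))]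

lemma integrable_rG_kernel (hi : Integrable (fun t : ℝ => t ^ p) μ) {y : ℝ} (hy : 0 < y) :
    Integrable (fun t : ℝ => (t : ℂ) ^ (p + 1) / (Complex.I * (y : ℂ) - (t : ℂ))) μ := by
  refine hi.norm.mono' (Measurable.aestronglyMeasurable (by fun_prop)) (ae_of_all _ fun t => ?_)
  have h1 : |t| ≤ ‖Complex.I * (y : ℂ) - (t : ℂ)‖ := by
    simpa using Complex.abs_re_le_norm (Complex.I * (y : ℂ) - (t : ℂ))
  have h2 : 0 < ‖Complex.I * (y : ℂ) - (t : ℂ)‖ := by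
    refine hy.trans_le ?_
    simpa [abs_of_pos hy] using Complex.abs_im_le_norm (Complex.I * (y : ℂ) - (t : ℂ))
  rw [norm_div, div_le_iff₀ h2, pow_succ, norm_mul, norm_pow, norm_pow, Complex.norm_real]
  gcongr
  exact h1

lemma rG_kernel_eq {t y : ℝ} (hy : 0 < y) :
    (t : ℂ) ^ (p + 1) / (Complex.I * (y : ℂ) - (t : ℂ)) =
      ((-(t ^ (p + 2) / (t ^ 2 + y ^ 2)) : ℝ) : ℂ)
        + ((-(y⁻¹ * (t ^ (p + 1) * y ^ 2 / (t ^ 2 + y ^ 2))) : ℝ) : ℂ) * Complex.I := by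
  have h : 0 < t ^ 2 + y ^ 2 := by positivity
  have h1 : (Complex.I * (y : ℂ) - (t : ℂ)) ≠ 0 := by
    intro h
    have := congrArg Complex.im h
    simp at this
    exact hy.ne' this
  have h2 : ((t : ℂ) ^ 2 + (y : ℂ) ^ 2) ≠ 0 := by exact_mod_cast h.ne'
  have h3 : (y : ℂ) ≠ 0 := by exact_mod_cast hy.ne'
  push_cast
  field_simp
  ring_nf
  simp only [Complex.I_sq]
  ring

lemma rG_re (hi : Integrable (fun t : ℝ => t ^ p) μ) {y : ℝ} (hy : 0 < y) :
    (rG μ p (Complex.I * (y : ℂ))).re = -∫ t, t ^ (p + 2) / (t ^ 2 + y ^ 2) ∂μ := by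
  rw [← integral_neg, rG, ← Complex.reCLM_apply,
    ← Complex.reCLM.integral_comp_comm (integrable_rG_kernel hi hy)]
  refine integral_congr_ae (ae_of_all _ fun t => ?_)
  simp only [rG_kernel_eq hy, Complex.reCLM_apply, Complex.add_re, Complex.ofReal_re,
    Complex.re_ofReal_mul, Complex.I_re, mul_zero, add_zero]

lemma rG_im (hi : Integrable (fun t : ℝ => t ^ p) μ) {y : ℝ} (hy : 0 < y) :
    (rG μ p (Complex.I * (y : ℂ))).im =
      -(y⁻¹ * ∫ t, t ^ (p + 1) * y ^ 2 / (t ^ 2 + y ^ 2) ∂μ) := by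
  rw [← integral_const_mul, ← integral_neg, rG, ← Complex.imCLM_apply,
    ← Complex.imCLM.integral_comp_comm (integrable_rG_kernel hi hy)]
  refine integral_congr_ae (ae_of_all _ fun t => ?_)
  simp only [rG_kernel_eq hy, Complex.imCLM_apply, Complex.add_im, Complex.ofReal_im,
    Complex.im_ofReal_mul, Complex.I_im, mul_one, zero_add]

lemma measureReal_Ioi_eq_add [IsFiniteMeasure μ] {x y : ℝ} (hxy : x ≤ y) :
    μ.real (Set.Ioi x) = μ.real (Set.Ioc x y) + μ.real (Set.Ioi y) := by
  rw [← Set.Ioc_union_Ioi_eq_Ioi hxy, measureReal_union (Set.Ioc_disjoint_Ioi le_rfl)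
    measurableSet_Ioi]

lemma measureReal_Ioi_anti [IsFiniteMeasure μ] {x y : ℝ} (hxy : x ≤ y) :
    μ.real (Set.Ioi y) ≤ μ.real (Set.Ioi x) :=
  measureReal_mono (Set.Ioi_subset_Ioi hxy)

lemma setIntegral_Ioc_pow_le [IsFiniteMeasure μ] {x y : ℝ} (hx : 0 ≤ x) (q : ℕ) :
    ∫ t in Set.Ioc x y, t ^ q ∂μ ≤ y ^ q * μ.real (Set.Ioc x y) := by
  calc ∫ t in Set.Ioc x y, t ^ q ∂μ ≤ ∫ _ in Set.Ioc x y, y ^ q ∂μ := by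
        refine setIntegral_mono_on ?_ (by simp) measurableSet_Ioc fun t ht => ?_
        · exact ((continuous_pow q).integrableOn_Icc (a := x) (b := y)).mono_set
            Set.Ioc_subset_Icc_self
        · exact pow_le_pow_left₀ (hx.trans ht.1.le) ht.2 q
    _ = _ := by simp [mul_comm]

lemma RegVarying.measure_Ioi_zero_ne_zero {ρ : ℝ}
    (h : RegVarying (fun y : ℝ => μ.real (Set.Ioi y)) ρ) : μ (Set.Ioi 0) ≠ 0 := by
  intro h'
  have h1 : 0 < μ.real (Set.Ioi 1) := h.1 1 one_pos
  rw [measureReal_def, measure_mono_null (Set.Ioi_subset_Ioi zero_le_one) h'] at h1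
  exact lt_irrefl _ h1

lemma two_rpow_neg_succ (p : ℕ) : (2 : ℝ) ^ (-((p : ℝ) + 1)) = (2 ^ (p + 1))⁻¹ := by
  rw [Real.rpow_neg two_pos.le, ← Nat.cast_succ, Real.rpow_natCast]

lemma eventually_tail_two_mul_le
    (h : RegVarying (fun y : ℝ => μ.real (Set.Ioi y)) (-((p : ℝ) + 1))) :
    ∀ᶠ x in atTop, 2 ^ p * μ.real (Set.Ioi (2 * x)) ≤ 3 / 4 * μ.real (Set.Ioi x) := by
  have h2 := h.2 2 two_pos
  rw [two_rpow_neg_succ] at h2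
  have hlt : ((2 : ℝ) ^ (p + 1))⁻¹ < 3 / 4 / 2 ^ p := by
    rw [pow_succ, inv_eq_one_div, div_lt_div_iff₀ (by positivity) (by positivity)]
    nlinarith [pow_pos (two_pos : (0 : ℝ) < 2) p]
  filter_upwards [h2.eventually (gt_mem_nhds hlt), eventually_gt_atTop 0] with x hx hx0
  have := (div_lt_iff₀ (h.1 x hx0)).1 hx
  rw [div_mul_eq_mul_div, lt_div_iff₀ (by positivity)] at this
  linarith

/-- Karamata-type bound for the tail of the highest finite moment. -/
lemma eventually_setIntegral_Ioi_pow_le [IsFiniteMeasure μ]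
    (hi : Integrable (fun t : ℝ => t ^ p) μ)
    (h : RegVarying (fun y : ℝ => μ.real (Set.Ioi y)) (-((p : ℝ) + 1))) :
    ∀ᶠ x in atTop, ∫ t in Set.Ioi x, t ^ p ∂μ ≤ 4 * ((2 * x) ^ p * μ.real (Set.Ioi x)) := by
  obtain ⟨X, hX⟩ := eventually_atTop.1
    ((eventually_tail_two_mul_le h).and (eventually_ge_atTop 1))
  filter_upwards [eventually_ge_atTop X] with x hx
  have hx0 : 0 < x := by linarith [(hX x hx).2]
  have step : ∀ y, X ≤ y → (∫ t in Set.Ioi y, t ^ p ∂μ) - 4 * ((2 * y) ^ p * μ.real (Set.Ioi y))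
      ≤ (∫ t in Set.Ioi (2 * y), t ^ p ∂μ)
        - 4 * ((2 * (2 * y)) ^ p * μ.real (Set.Ioi (2 * y))) := by
    intro y hy
    obtain ⟨h1, h2⟩ := hX y hy
    have h3 : ∫ t in Set.Ioi y, t ^ p ∂μ
        = (∫ t in Set.Ioc y (2 * y), t ^ p ∂μ) + ∫ t in Set.Ioi (2 * y), t ^ p ∂μ := by
      rw [← Set.Ioc_union_Ioi_eq_Ioi (show y ≤ 2 * y by linarith),
        setIntegral_union (Set.Ioc_disjoint_Ioi le_rfl) measurableSet_Ioi hi.integrableOn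
          hi.integrableOn]
    have h4 := setIntegral_Ioc_pow_le (μ := μ) (y := 2 * y) (show 0 ≤ y by linarith) p
    have h5 : (2 * y) ^ p * μ.real (Set.Ioc y (2 * y)) ≤ (2 * y) ^ p * μ.real (Set.Ioi y) :=
      mul_le_mul_of_nonneg_left (measureReal_mono Set.Ioc_subset_Ioi_self) (by positivity)
    have h6 : (2 * (2 * y)) ^ p * μ.real (Set.Ioi (2 * y))
        ≤ 3 / 4 * ((2 * y) ^ p * μ.real (Set.Ioi y)) := by
      rw [mul_pow 2 (2 * y)]
      calc 2 ^ p * (2 * y) ^ p * μ.real (Set.Ioi (2 * y))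
          = (2 * y) ^ p * (2 ^ p * μ.real (Set.Ioi (2 * y))) := by ring
        _ ≤ (2 * y) ^ p * (3 / 4 * μ.real (Set.Ioi y)) := by gcongr
        _ = _ := by ring
    linarith
  have iter : ∀ n : ℕ, (∫ t in Set.Ioi x, t ^ p ∂μ) - 4 * ((2 * x) ^ p * μ.real (Set.Ioi x))
      ≤ (∫ t in Set.Ioi (2 ^ n * x), t ^ p ∂μ)
        - 4 * ((2 * (2 ^ n * x)) ^ p * μ.real (Set.Ioi (2 ^ n * x))) := by
    intro n
    induction n with
    | zero => simp
    | succ n ih =>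
      rw [pow_succ', mul_assoc]
      refine ih.trans (step _ (hx.trans ?_))
      exact le_mul_of_one_le_left hx0.le (one_le_pow₀ one_le_two)
  have lim : Tendsto (fun n : ℕ => ∫ t in Set.Ioi (2 ^ n * x), t ^ p ∂μ) atTop (𝓝 0) := by
    have := tendsto_setIntegral_of_antitone (μ := μ) (f := fun t : ℝ => t ^ p)
      (s := fun n : ℕ => Set.Ioi (2 ^ n * x)) (fun n => measurableSet_Ioi)
      (fun m n hmn => Set.Ioi_subset_Ioi (mul_le_mul_of_nonneg_right
        (pow_le_pow_right₀ one_le_two hmn) hx0.le)) ⟨0, hi.integrableOn⟩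
    have he : ⋂ n : ℕ, Set.Ioi (2 ^ n * x) = ∅ := by
      refine Set.eq_empty_of_forall_notMem fun t ht => ?_
      obtain ⟨n, hn⟩ := pow_unbounded_of_one_lt (t / x) (one_lt_two : (1 : ℝ) < 2)
      exact lt_asymm ((div_lt_iff₀ hx0).1 hn) (Set.mem_iInter.1 ht n)
    rwa [he, setIntegral_empty] at this
  refine sub_nonpos.1 (ge_of_tendsto' lim fun n => (iter n).trans (sub_le_self _ ?_))
  positivity

/-- The smoothly truncated moment `∫ t^{p+1} / (1 + (t/y)²) dμ(t) = -y Im r_G(iy)`. -/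
def smoothTruncMoment (μ : Measure ℝ) (p : ℕ) (y : ℝ) : ℝ :=
  ∫ t, t ^ (p + 1) * y ^ 2 / (t ^ 2 + y ^ 2) ∂μ

lemma smoothTrunc_kernel_mono {t x y : ℝ} (ht : 0 ≤ t) (hx : 0 < x) (hxy : x ≤ y) :
    t ^ (p + 1) * x ^ 2 / (t ^ 2 + x ^ 2) ≤ t ^ (p + 1) * y ^ 2 / (t ^ 2 + y ^ 2) := by
  have hy : 0 < y := hx.trans_le hxy
  rw [mul_div_assoc, mul_div_assoc]
  refine mul_le_mul_of_nonneg_left ?_ (by positivity)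
  rw [div_le_div_iff₀ (by positivity) (by positivity)]
  nlinarith [mul_le_mul_of_nonneg_left (pow_le_pow_left₀ hx.le hxy 2) (sq_nonneg t)]

lemma smoothTruncMoment_mono (h0 : ∀ᵐ t ∂μ, (0 : ℝ) ≤ t) (hi : Integrable (fun t : ℝ => t ^ p) μ)
    {x y : ℝ} (hx : 0 < x) (hxy : x ≤ y) : smoothTruncMoment μ p x ≤ smoothTruncMoment μ p y :=
  integral_mono_ae (integrable_im_kernel hi hx) (integrable_im_kernel hi (hx.trans_le hxy))
    (h0.mono fun _ ht => smoothTrunc_kernel_mono ht hx hxy)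

lemma smoothTruncMoment_pos (h0 : ∀ᵐ t ∂μ, (0 : ℝ) ≤ t) (hi : Integrable (fun t : ℝ => t ^ p) μ)
    (hpos : μ (Set.Ioi 0) ≠ 0) {y : ℝ} (hy : 0 < y) : 0 < smoothTruncMoment μ p y := by
  refine (integral_pos_iff_support_of_nonneg_ae (h0.mono fun t ht => ?_)
    (integrable_im_kernel hi hy)).2 ((pos_iff_ne_zero.2 hpos).trans_le (measure_mono fun t ht => ?_))
  · simp only [Pi.zero_apply]; positivity
  · have : 0 < t := ht
    simp only [Function.mem_support]
    positivity

lemma tendsto_smoothTruncMoment (h0 : ∀ᵐ t ∂μ, (0 : ℝ) ≤ t)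
    (hi : Integrable (fun t : ℝ => t ^ p) μ)
    (htop : (∫⁻ t, ENNReal.ofReal (t ^ (p + 1)) ∂μ) = ⊤) :
    Tendsto (smoothTruncMoment μ p) atTop atTop := by
  have h1 : Tendsto (fun n : ℕ => ∫⁻ t, ENNReal.ofReal
      (t ^ (p + 1) * ((n : ℝ) + 1) ^ 2 / (t ^ 2 + ((n : ℝ) + 1) ^ 2)) ∂μ) atTop (𝓝 ⊤) := by
    rw [← htop]
    refine lintegral_tendsto_of_tendsto_of_monotone (fun n => Measurable.aemeasurable
      (by fun_prop)) ?_ ?_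
    · filter_upwards [h0] with t ht m n hmn
      exact ENNReal.ofReal_le_ofReal (smoothTrunc_kernel_mono ht (by positivity)
        (by simpa using hmn))
    · refine ae_of_all _ fun t => (ENNReal.continuous_ofReal.tendsto _).comp ?_
      have h2 : Tendsto (fun n : ℕ => t ^ 2 / ((n : ℝ) + 1) ^ 2) atTop (𝓝 0) :=
        tendsto_const_nhds.div_atTop ((tendsto_pow_atTop two_ne_zero).comp
          (tendsto_atTop_add_const_right _ _ tendsto_natCast_atTop_atTop))
      have h3 := (tendsto_const_nhds (x := t ^ (p + 1))).div (h2.add_const 1) (by norm_num)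
      rw [zero_add, div_one] at h3
      refine h3.congr fun n => ?_
      have : ((n : ℝ) + 1) ≠ 0 := by positivity
      simp only [Pi.div_apply]
      field_simp
  have h4 : Tendsto (fun n : ℕ => smoothTruncMoment μ p ((n : ℝ) + 1)) atTop atTop := by
    refine tendsto_atTop.2 fun b => ?_
    filter_upwards [h1.eventually (lt_mem_nhds (ENNReal.ofReal_lt_top (r := b)))] with n hn
    rw [← ofReal_integral_eq_lintegral_ofReal (integrable_im_kernel hi (by positivity))
      (h0.mono fun t ht => by simp only [Pi.zero_apply]; positivity)] at hn
    exact (ENNReal.ofReal_lt_ofReal_iff'.1 hn).1.le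
  have h5 := h4.comp (tendsto_nat_floor_atTop (α := ℝ))
  refine tendsto_atTop_mono' _ ?_
    (h5.comp (tendsto_atTop_add_const_right atTop (-1 : ℝ) tendsto_id))
  filter_upwards [eventually_ge_atTop 1] with y hy
  refine smoothTruncMoment_mono h0 hi (by positivity) ?_
  have := Nat.floor_le (show 0 ≤ y + -1 by linarith)
  simp only [id]
  linarith

lemma smoothTruncMoment_two_mul_ge [IsFiniteMeasure μ] (h0 : ∀ᵐ t ∂μ, (0 : ℝ) ≤ t)
    (hi : Integrable (fun t : ℝ => t ^ p) μ) {y : ℝ} (hy : 0 < y) :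
    smoothTruncMoment μ p y + 3 / 10 * y ^ (p + 1) * μ.real (Set.Ioc y (2 * y))
      ≤ smoothTruncMoment μ p (2 * y) := by
  have hc : ∫ t, (Set.Ioc y (2 * y)).indicator (fun _ => 3 / 10 * y ^ (p + 1)) t ∂μ
      = 3 / 10 * y ^ (p + 1) * μ.real (Set.Ioc y (2 * y)) := by
    rw [integral_indicator_const _ measurableSet_Ioc, smul_eq_mul, mul_comm]
  have hci : Integrable ((Set.Ioc y (2 * y)).indicator (fun _ : ℝ => 3 / 10 * y ^ (p + 1))) μ :=
    (integrable_const _).indicator measurableSet_Ioc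
  rw [← hc, smoothTruncMoment, ← integral_add (integrable_im_kernel hi hy) hci]
  refine integral_mono_ae ((integrable_im_kernel hi hy).add hci)
    (integrable_im_kernel hi (by positivity)) (h0.mono fun t ht => ?_)
  by_cases hm : t ∈ Set.Ioc y (2 * y)
  · simp only [Set.indicator_of_mem hm]
    have h1 : y ^ 2 / (t ^ 2 + y ^ 2) + 3 / 10 ≤ (2 * y) ^ 2 / (t ^ 2 + (2 * y) ^ 2) := by
      have ha : y ^ 2 ≤ t ^ 2 := pow_le_pow_left₀ hy.le hm.1.le 2
      have hb : t ^ 2 ≤ 4 * y ^ 2 := by nlinarith [pow_le_pow_left₀ ht hm.2 2]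
      rw [div_add' _ _ _ (by positivity), div_le_div_iff₀ (by positivity) (by positivity)]
      nlinarith [mul_nonneg (sub_nonneg.2 ha) (sub_nonneg.2 hb)]
    have h2 : y ^ (p + 1) ≤ t ^ (p + 1) := pow_le_pow_left₀ hy.le hm.1.le _
    rw [mul_div_assoc, mul_div_assoc]
    have h3 := mul_le_mul_of_nonneg_left h1 (pow_nonneg ht (p + 1))
    linarith
  · simp only [Set.indicator_of_notMem hm, add_zero]
    exact smoothTrunc_kernel_mono ht hy (by linarith)

lemma eventually_pow_mul_tail_le [IsFiniteMeasure μ] (h0 : ∀ᵐ t ∂μ, (0 : ℝ) ≤ t)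
    (hi : Integrable (fun t : ℝ => t ^ p) μ)
    (h : RegVarying (fun y : ℝ => μ.real (Set.Ioi y)) (-((p : ℝ) + 1))) (N : ℕ) :
    ∀ᶠ y in atTop, 3 / 80 * N * (y ^ (p + 1) * μ.real (Set.Ioi y)) ≤ smoothTruncMoment μ p y := by
  induction N with
  | zero =>
    filter_upwards [eventually_gt_atTop 0] with y hy
    simpa using (smoothTruncMoment_pos h0 hi h.measure_Ioi_zero_ne_zero hy).le
  | succ N ih =>
    have h2 := h.2 2 two_pos
    rw [two_rpow_neg_succ] at h2
    have h3 : ((2 : ℝ) ^ (p + 1))⁻¹ < (N + 2) / (N + 1) * (2 ^ (p + 1))⁻¹ := by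
      refine lt_mul_of_one_lt_left (by positivity) ?_
      rw [one_lt_div (by positivity)]
      linarith
    have key : ∀ᶠ y in atTop, 3 / 80 * ((N : ℝ) + 1) *
        ((2 * y) ^ (p + 1) * μ.real (Set.Ioi (2 * y))) ≤ smoothTruncMoment μ p (2 * y) := by
      filter_upwards [ih, h2.eventually (gt_mem_nhds h3), eventually_tail_two_mul_le h,
        eventually_gt_atTop 0] with y h4 h5 h6 hy
      have h7 := smoothTruncMoment_two_mul_ge h0 hi hy
      have h8 := measureReal_Ioi_eq_add (μ := μ) (show y ≤ 2 * y by linarith)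
      have h9 : μ.real (Set.Ioi (2 * y)) ≤ 3 / 4 * μ.real (Set.Ioi y) :=
        (le_mul_of_one_le_left measureReal_nonneg (one_le_pow₀ one_le_two)).trans h6
      have h10 : 1 / 4 * μ.real (Set.Ioi y) ≤ μ.real (Set.Ioc y (2 * y)) := by linarith
      have h11 := mul_le_mul_of_nonneg_left h10 (show 0 ≤ 3 / 10 * y ^ (p + 1) by positivity)
      rw [div_lt_iff₀ (h.1 y hy), ← div_eq_mul_inv, div_div, div_mul_eq_mul_div,
        lt_div_iff₀ (by positivity)] at h5
      have h12 := mul_le_mul_of_nonneg_left h5.le (show 0 ≤ 3 / 80 * y ^ (p + 1) by positivity)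
      rw [mul_pow]
      linarith
    have := (tendsto_id.atTop_div_const (two_pos : (0 : ℝ) < 2)).eventually key
    filter_upwards [this] with y hy
    simpa [mul_div_cancel₀] using hy

lemma smoothTruncMoment_mul_le (h0 : ∀ᵐ t ∂μ, (0 : ℝ) ≤ t)
    (hi : Integrable (fun t : ℝ => t ^ p) μ) {y a δ : ℝ} (hy : 0 < y) (ha : 0 < a) :
    smoothTruncMoment μ p (a * y) ≤ (1 + δ ^ 2) * smoothTruncMoment μ p y
      + a / 2 * y * ∫ t in Set.Ioi (δ * y), t ^ p ∂μ := by
  have hI := integrable_im_kernel hi hy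
  have hind := hi.indicator (measurableSet_Ioi (a := δ * y))
  rw [smoothTruncMoment, smoothTruncMoment, ← integral_indicator measurableSet_Ioi,
    ← integral_const_mul, ← integral_const_mul,
    ← integral_add (hI.const_mul _) (hind.const_mul _)]
  refine integral_mono_ae (integrable_im_kernel hi (by positivity))
    ((hI.const_mul _).add (hind.const_mul _)) (h0.mono fun t ht => ?_)
  by_cases hm : t ∈ Set.Ioi (δ * y)
  · simp only [Set.indicator_of_mem hm]
    have h1 : t ^ (p + 1) * (a * y) ^ 2 / (t ^ 2 + (a * y) ^ 2) ≤ a / 2 * y * t ^ p := by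
      rw [div_le_iff₀ (by positivity), pow_succ]
      have : 0 ≤ t ^ p * (a * y) * (t - a * y) ^ 2 := by positivity
      linarith
    refine h1.trans (le_add_of_nonneg_left ?_)
    positivity
  · simp only [Set.indicator_of_notMem hm, mul_zero, add_zero]
    have hty : t ≤ δ * y := not_lt.1 hm
    rw [mul_div_assoc, mul_div_assoc, mul_left_comm]
    refine mul_le_mul_of_nonneg_left ?_ (by positivity)
    have h1 : t ^ 2 ≤ δ ^ 2 * y ^ 2 := by nlinarith [pow_le_pow_left₀ ht hty 2]
    calc (a * y) ^ 2 / (t ^ 2 + (a * y) ^ 2) ≤ 1 :=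
          div_le_one_of_le₀ (by nlinarith [sq_nonneg t]) (by positivity)
      _ ≤ (1 + δ ^ 2) * (y ^ 2 / (t ^ 2 + y ^ 2)) := by
          rw [mul_div_assoc', one_le_div (by positivity)]
          linarith

/-- The smoothly truncated moment is slowly varying. -/
lemma tendsto_smoothTruncMoment_div [IsFiniteMeasure μ] (h0 : ∀ᵐ t ∂μ, (0 : ℝ) ≤ t)
    (hi : Integrable (fun t : ℝ => t ^ p) μ)
    (h : RegVarying (fun y : ℝ => μ.real (Set.Ioi y)) (-((p : ℝ) + 1))) {a : ℝ} (ha : 0 < a) :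
    Tendsto (fun y => smoothTruncMoment μ p (a * y) / smoothTruncMoment μ p y) atTop (𝓝 1) := by
  have hpos : ∀ y, 0 < y → 0 < smoothTruncMoment μ p y := fun y hy =>
    smoothTruncMoment_pos h0 hi h.measure_Ioi_zero_ne_zero hy
  have main : ∀ a : ℝ, 1 ≤ a →
      Tendsto (fun y => smoothTruncMoment μ p (a * y) / smoothTruncMoment μ p y) atTop (𝓝 1) := by
    intro a ha1
    have ha : 0 < a := by linarith
    refine tendsto_order.2 ⟨fun b hb => ?_, fun b hb => ?_⟩
    · filter_upwards [eventually_gt_atTop 0] with y hy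
      refine hb.trans_le ((one_le_div (hpos y hy)).2 ?_)
      exact smoothTruncMoment_mono h0 hi hy (le_mul_of_one_le_left hy.le ha1)
    · obtain ⟨δ, hδ0, hδ1, hδ⟩ : ∃ δ : ℝ, 0 < δ ∧ δ ≤ 1 ∧ δ ^ 2 ≤ (b - 1) / 3 := by
        refine ⟨min 1 ((b - 1) / 3), lt_min one_pos (by linarith), min_le_left _ _, ?_⟩
        have h1 := min_le_left 1 ((b - 1) / 3)
        have h2 := min_le_right 1 ((b - 1) / 3)
        have h3 : 0 < min 1 ((b - 1) / 3) := lt_min one_pos (by linarith)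
        nlinarith
      obtain ⟨N, hN⟩ := exists_nat_ge (2 * a * 2 ^ p / δ / ((b - 1) / 3 * (3 / 80)))
      rw [div_le_iff₀ (by linarith)] at hN
      have hlim : Tendsto (fun y : ℝ => δ * y) atTop atTop := tendsto_id.const_mul_atTop hδ0
      filter_upwards [hlim.eventually (eventually_setIntegral_Ioi_pow_le hi h),
        hlim.eventually (eventually_pow_mul_tail_le h0 hi h N),
        eventually_gt_atTop 0] with y h1 h2 hy
      rw [div_lt_iff₀ (hpos y hy)]
      have h3 := smoothTruncMoment_mul_le h0 hi (δ := δ) hy ha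
      have h4 : a / 2 * y * ∫ t in Set.Ioi (δ * y), t ^ p ∂μ
          ≤ (b - 1) / 3 * smoothTruncMoment μ p y := by
        have hW : 0 ≤ (δ * y) ^ (p + 1) * μ.real (Set.Ioi (δ * y)) := by positivity
        calc a / 2 * y * ∫ t in Set.Ioi (δ * y), t ^ p ∂μ
            ≤ a / 2 * y * (4 * ((2 * (δ * y)) ^ p * μ.real (Set.Ioi (δ * y)))) := by gcongr
          _ = 2 * a * 2 ^ p / δ * ((δ * y) ^ (p + 1) * μ.real (Set.Ioi (δ * y))) := by
              rw [mul_pow 2 (δ * y), pow_succ]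
              field_simp
              ring
          _ ≤ N * ((b - 1) / 3 * (3 / 80)) * ((δ * y) ^ (p + 1) * μ.real (Set.Ioi (δ * y))) := by
              gcongr
          _ = (b - 1) / 3 * (3 / 80 * N * ((δ * y) ^ (p + 1) * μ.real (Set.Ioi (δ * y)))) := by
              ring
          _ ≤ (b - 1) / 3 * smoothTruncMoment μ p y := by
              refine mul_le_mul_of_nonneg_left (h2.trans ?_) (by linarith)
              exact smoothTruncMoment_mono h0 hi (by positivity)
                (mul_le_of_le_one_left hy.le hδ1)
      have h5 := mul_le_mul_of_nonneg_right hδ (hpos y hy).le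
      have h6 := mul_pos (sub_pos.2 hb) (hpos y hy)
      linarith
  rcases le_total 1 a with h1 | h1
  · exact main a h1
  · have := ((main a⁻¹ ((one_le_inv₀ ha).2 h1)).comp (tendsto_id.const_mul_atTop ha)).inv₀
      one_ne_zero
    rw [inv_one] at this
    refine this.congr fun y => ?_
    simp [inv_mul_cancel_left₀ ha.ne']

lemma pow_mul_tail_le_integral (h0 : ∀ᵐ t ∂μ, (0 : ℝ) ≤ t) [IsFiniteMeasure μ]
    (hi : Integrable (fun t : ℝ => t ^ p) μ) {K y : ℝ} (hK : 0 < K) (hy : 0 < y) :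
    (K * y) ^ p * (K ^ 2 / (K ^ 2 + 1)) * μ.real (Set.Ioi (K * y))
      ≤ ∫ t, t ^ (p + 2) / (t ^ 2 + y ^ 2) ∂μ := by
  have hc : ∫ t, (Set.Ioi (K * y)).indicator (fun _ => (K * y) ^ p * (K ^ 2 / (K ^ 2 + 1))) t ∂μ
      = (K * y) ^ p * (K ^ 2 / (K ^ 2 + 1)) * μ.real (Set.Ioi (K * y)) := by
    rw [integral_indicator_const _ measurableSet_Ioi, smul_eq_mul, mul_comm]
  rw [← hc]
  refine integral_mono_ae ((integrable_const _).indicator measurableSet_Ioi)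
    (integrable_re_kernel hi hy) (h0.mono fun t ht => ?_)
  refine Set.indicator_apply_le' (fun hm => ?_) fun _ => by positivity
  have hm : K * y ≤ t := le_of_lt hm
  beta_reduce
  rw [pow_add, mul_div_assoc]
  have h1 : (K * y) ^ p ≤ t ^ p := pow_le_pow_left₀ (by positivity) hm p
  have h2 : K ^ 2 / (K ^ 2 + 1) ≤ t ^ 2 / (t ^ 2 + y ^ 2) := by
    rw [div_le_div_iff₀ (by positivity) (by positivity)]
    nlinarith [pow_le_pow_left₀ (by positivity) hm 2]
  gcongr

/-- Karamata-type bound for the truncated second moment of a slowly varying tail. -/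
lemma eventually_setIntegral_Icc_sq_le [IsFiniteMeasure μ]
    (h : RegVarying (fun y : ℝ => μ.real (Set.Ioi y)) (-0)) :
    ∀ᶠ x in atTop, ∫ t in Set.Icc 0 x, t ^ 2 ∂μ ≤ 5 * (x ^ 2 * μ.real (Set.Ioi x)) := by
  have h2 := h.2 2 two_pos
  rw [neg_zero, Real.rpow_zero] at h2
  obtain ⟨X, hX⟩ := eventually_atTop.1
    ((h2.eventually (lt_mem_nhds (one_half_lt_one))).and (eventually_ge_atTop 1))
  have hX0 : 0 < X := by linarith [(hX X le_rfl).2]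
  have hint : ∀ a b : ℝ, IntegrableOn (fun t : ℝ => t ^ 2) (Set.Icc a b) μ := fun a b =>
    (continuous_pow 2).integrableOn_Icc
  have bound : ∀ x, X ≤ x → (∫ t in Set.Icc 0 x, t ^ 2 ∂μ) - 4 * (x ^ 2 * μ.real (Set.Ioi x))
      ≤ ∫ t in Set.Icc 0 (2 * X), t ^ 2 ∂μ := by
    apply le_of_doubling hX0
    · intro x hx
      have hx0 : 0 < x := by linarith
      have h3 := (lt_div_iff₀ (h.1 x hx0)).1 (hX x hx).1
      have h4 : ∫ t in Set.Icc 0 (2 * x), t ^ 2 ∂μ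
          = (∫ t in Set.Icc 0 x, t ^ 2 ∂μ) + ∫ t in Set.Ioc x (2 * x), t ^ 2 ∂μ := by
        rw [← Set.Icc_union_Ioc_eq_Icc hx0.le (show x ≤ 2 * x by linarith),
          setIntegral_union ?_ measurableSet_Ioc (hint _ _)
            ((hint _ _).mono_set Set.Ioc_subset_Icc_self)]
        exact Set.disjoint_left.2 fun t h5 h6 => not_lt.2 h5.2 h6.1
      have h5 := setIntegral_Ioc_pow_le (μ := μ) (y := 2 * x) hx0.le 2
      have h6 : (2 * x) ^ 2 * μ.real (Set.Ioc x (2 * x)) ≤ (2 * x) ^ 2 * μ.real (Set.Ioi x) :=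
        mul_le_mul_of_nonneg_left (measureReal_mono Set.Ioc_subset_Ioi_self) (by positivity)
      have h7 := mul_le_mul_of_nonneg_left h3.le (show 0 ≤ (2 * x) ^ 2 by positivity)
      linarith
    · intro x _ hx2
      refine (sub_le_self _ (by positivity)).trans ?_
      refine setIntegral_mono_set (hint _ _) (ae_of_all _ fun t => sq_nonneg t) ?_
      exact (Set.Icc_subset_Icc_right hx2).eventuallyLE
  have h3 := tendsto_rpow_mul_tail le_rfl two_pos h
  filter_upwards [eventually_ge_atTop X,
    h3.eventually_ge_atTop (∫ t in Set.Icc 0 (2 * X), t ^ 2 ∂μ)] with x hx h4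
  rw [Real.rpow_two] at h4
  linarith [bound x hx]

lemma integral_re_kernel_zero_le [IsFiniteMeasure μ] (h0 : ∀ᵐ t ∂μ, (0 : ℝ) ≤ t) {δ y : ℝ}
    (hy : 0 < y) :
    ∫ t, t ^ 2 / (t ^ 2 + y ^ 2) ∂μ
      ≤ μ.real (Set.Ioi (δ * y)) + (y ^ 2)⁻¹ * ∫ t in Set.Icc 0 (δ * y), t ^ 2 ∂μ := by
  have hi1 : Integrable ((Set.Ioi (δ * y)).indicator (fun _ : ℝ => (1 : ℝ))) μ :=
    (integrable_const _).indicator measurableSet_Ioi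
  have hi2 : Integrable ((Set.Icc 0 (δ * y)).indicator (fun t : ℝ => t ^ 2)) μ :=
    (integrable_indicator_iff measurableSet_Icc).2 (continuous_pow 2).integrableOn_Icc
  have hc : ∫ t, (Set.Ioi (δ * y)).indicator (fun _ => (1 : ℝ)) t ∂μ
      = μ.real (Set.Ioi (δ * y)) := by
    rw [integral_indicator_const _ measurableSet_Ioi, smul_eq_mul, mul_one]
  rw [← hc, ← integral_indicator measurableSet_Icc, ← integral_const_mul,
    ← integral_add hi1 (hi2.const_mul _)]
  refine integral_mono_ae ?_ (hi1.add (hi2.const_mul _)) (h0.mono fun t ht => ?_)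
  · simpa using integrable_re_kernel (μ := μ) (p := 0) (by simp) hy
  beta_reduce
  rcases lt_or_ge (δ * y) t with hm | hm
  · rw [Set.indicator_of_mem (Set.mem_Ioi.2 hm),
      Set.indicator_of_notMem (fun h : t ∈ Set.Icc 0 (δ * y) => not_le.2 hm h.2), mul_zero, add_zero]
    exact div_le_one_of_le₀ (by nlinarith [sq_nonneg y]) (by positivity)
  · rw [Set.indicator_of_notMem (fun h : t ∈ Set.Ioi (δ * y) => not_le.2 h hm),
      Set.indicator_of_mem (Set.mem_Icc.2 ⟨ht, hm⟩), zero_add, mul_comm, ← div_eq_mul_inv]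
    gcongr
    nlinarith [sq_nonneg t]

lemma tendsto_integral_re_kernel_div_tail [IsFiniteMeasure μ] (h0 : ∀ᵐ t ∂μ, (0 : ℝ) ≤ t)
    (h : RegVarying (fun y : ℝ => μ.real (Set.Ioi y)) (-0)) :
    Tendsto (fun y => (∫ t, t ^ 2 / (t ^ 2 + y ^ 2) ∂μ) / μ.real (Set.Ioi y)) atTop (𝓝 1) := by
  have hlim : ∀ c a : ℝ, 0 < a → Tendsto
      (fun y => c * (μ.real (Set.Ioi (a * y)) / μ.real (Set.Ioi y))) atTop (𝓝 c) := by
    intro c a ha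
    simpa using (h.2 a ha).const_mul c
  refine tendsto_order.2 ⟨fun b hb => ?_, fun b hb => ?_⟩
  · obtain ⟨K, hK, hKb⟩ : ∃ K : ℝ, 0 < K ∧ b < K ^ 2 / (K ^ 2 + 1) := by
      have h1 : 0 < 1 - b := sub_pos.2 hb
      refine ⟨1 + (1 - b)⁻¹, by positivity, ?_⟩
      rw [lt_div_iff₀ (by positivity)]
      have h2 : (1 - b) * (1 - b)⁻¹ = 1 := mul_inv_cancel₀ h1.ne'
      have h3 : 0 < (1 - b)⁻¹ := inv_pos.2 h1
      nlinarith
    filter_upwards [(hlim _ K hK).eventually (lt_mem_nhds hKb), eventually_gt_atTop 0]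
      with y h1 hy
    refine h1.trans_le ?_
    have h2 := pow_mul_tail_le_integral (p := 0) h0 (by simp) hK hy
    have h3 : 0 < μ.real (Set.Ioi y) := h.1 y hy
    rw [mul_div_assoc']
    gcongr
    simpa using h2
  · obtain ⟨δ, hδ, hδb⟩ : ∃ δ : ℝ, 0 < δ ∧ 1 + 5 * δ ^ 2 < b := by
      refine ⟨min 1 ((b - 1) / 6), lt_min one_pos (by linarith), ?_⟩
      have h1 := min_le_left 1 ((b - 1) / 6)
      have h2 := min_le_right 1 ((b - 1) / 6)
      have h3 : 0 < min 1 ((b - 1) / 6) := lt_min one_pos (by linarith)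
      nlinarith
    filter_upwards [(hlim _ δ hδ).eventually (gt_mem_nhds hδb), eventually_gt_atTop 0,
      (tendsto_id.const_mul_atTop hδ).eventually (eventually_setIntegral_Icc_sq_le h)]
      with y h1 hy h2
    refine lt_of_le_of_lt ?_ h1
    have h3 : 0 < μ.real (Set.Ioi y) := h.1 y hy
    rw [mul_div_assoc']
    gcongr
    refine (integral_re_kernel_zero_le (δ := δ) h0 hy).trans ?_
    have h4 := mul_le_mul_of_nonneg_left h2 (show 0 ≤ (y ^ 2)⁻¹ by positivity)
    have h5 : (y ^ 2)⁻¹ * (5 * ((δ * y) ^ 2 * μ.real (Set.Ioi (δ * y))))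
        = 5 * δ ^ 2 * μ.real (Set.Ioi (δ * y)) := by
      field_simp
    simp only [id] at h4
    linarith

lemma tendsto_rpow_mul_abs_rG_re [IsFiniteMeasure μ] (h0 : ∀ᵐ t ∂μ, (0 : ℝ) ≤ t)
    (hi : Integrable (fun t : ℝ => t ^ p) μ)
    (h : RegVarying (fun y : ℝ => μ.real (Set.Ioi y)) (-(p : ℝ))) {ε : ℝ} (hε : 0 < ε) :
    Tendsto (fun y : ℝ => y ^ ε * |(rG μ p (Complex.I * (y : ℂ))).re|) atTop atTop := by
  have h1 := tendsto_rpow_mul_tail (δ := p + ε) p.cast_nonneg (by linarith) h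
  refine tendsto_atTop_mono' _ ?_ (h1.const_mul_atTop (one_half_pos (α := ℝ)))
  filter_upwards [eventually_gt_atTop 0] with y hy
  have h2 := pow_mul_tail_le_integral h0 hi one_pos hy
  have h3 : y ^ (p + ε : ℝ) = y ^ p * y ^ ε := by rw [Real.rpow_add hy, Real.rpow_natCast]
  rw [rG_re hi hy, abs_neg, h3]
  norm_num at h2
  calc 1 / 2 * (y ^ p * y ^ ε * μ.real (Set.Ioi y))
      = y ^ ε * (y ^ p * (1 / 2) * μ.real (Set.Ioi y)) := by ring
    _ ≤ y ^ ε * |∫ t, t ^ (p + 2) / (t ^ 2 + y ^ 2) ∂μ| := by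
        gcongr
        exact h2.trans (le_abs_self _)

lemma regVarying_neg_rG_im [IsFiniteMeasure μ] (h0 : ∀ᵐ t ∂μ, (0 : ℝ) ≤ t)
    (hi : Integrable (fun t : ℝ => t ^ p) μ)
    (h : RegVarying (fun y : ℝ => μ.real (Set.Ioi y)) (-((p : ℝ) + 1))) :
    RegVarying (fun y : ℝ => -(rG μ p (Complex.I * (y : ℂ))).im) (-1) := by
  refine ⟨fun y hy => ?_, fun a ha => ?_⟩
  · beta_reduce
    rw [rG_im hi hy, neg_neg]
    exact mul_pos (inv_pos.2 hy) (smoothTruncMoment_pos h0 hi h.measure_Ioi_zero_ne_zero hy)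
  · have h1 := (tendsto_smoothTruncMoment_div h0 hi h ha).const_mul a⁻¹
    rw [mul_one] at h1
    rw [Real.rpow_neg_one]
    refine h1.congr' ?_
    filter_upwards [eventually_gt_atTop 0] with y hy
    rw [rG_im hi hy, rG_im hi (mul_pos ha hy), neg_neg, neg_neg, ← smoothTruncMoment,
      ← smoothTruncMoment, mul_inv, mul_assoc, mul_div_assoc, mul_div_mul_left _ _ (by positivity)]

lemma tendsto_mul_abs_rG_im (h0 : ∀ᵐ t ∂μ, (0 : ℝ) ≤ t)
    (hi : Integrable (fun t : ℝ => t ^ p) μ)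
    (htop : (∫⁻ t, ENNReal.ofReal (t ^ (p + 1)) ∂μ) = ⊤) :
    Tendsto (fun y : ℝ => y * |(rG μ p (Complex.I * (y : ℂ))).im|) atTop atTop := by
  refine tendsto_atTop_mono' _ ?_ (tendsto_smoothTruncMoment h0 hi htop)
  filter_upwards [eventually_gt_atTop 0] with y hy
  rw [rG_im hi hy, abs_neg, abs_mul, abs_of_pos (inv_pos.2 hy), mul_inv_cancel_left₀ hy.ne']
  exact le_abs_self _

lemma tendsto_rpow_mul_rG_im [IsFiniteMeasure μ] (h0 : ∀ᵐ t ∂μ, (0 : ℝ) ≤ t)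
    (hi : Integrable (fun t : ℝ => t ^ p) μ)
    (h : RegVarying (fun y : ℝ => μ.real (Set.Ioi y)) (-((p : ℝ) + 1))) {ε : ℝ} (hε : 0 < ε) :
    Tendsto (fun y : ℝ => y ^ (1 - ε) * (rG μ p (Complex.I * (y : ℂ))).im) atTop (𝓝 0) := by
  have h1 := (tendsto_div_rpow_of_doubling (ρ := 0)
    (fun y hy => smoothTruncMoment_pos h0 hi h.measure_Ioi_zero_ne_zero hy)
    (fun x hx y _ hxy => smoothTruncMoment_mono h0 hi hx hxy)
    (by simpa using tendsto_smoothTruncMoment_div h0 hi h two_pos) le_rfl hε).neg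
  rw [neg_zero] at h1
  refine h1.congr' ?_
  filter_upwards [eventually_gt_atTop 0] with y hy
  rw [rG_im hi hy, ← smoothTruncMoment, Real.rpow_sub hy, Real.rpow_one]
  field_simp

end Remainder

/-- Proposition (boundary cases `α = p` and `α = p+1`):
(a) if the tail of `μ ∈ M_p` is regularly varying of index `-p`, then
`y^ε·|Re r_G(iy)| → ∞` for every `ε > 0`, and if `p = 0` then
`Re r_G(iy) ~ −μ((y,∞))`;
(b) if the tail is regularly varying of index `-(p+1)`, then `y ↦ −Im r_G(iy)` is
regularly varying of index `-1`, `y·|Im r_G(iy)| → ∞`, and `y^{1−ε}·Im r_G(iy) → 0`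
for every `ε > 0`. -/
theorem stmt18 (μ : Measure ℝ) (p : ℕ) (hμ : MemMp μ p) :
    (RegVarying (fun y : ℝ => (μ (Set.Ioi y)).toReal) (-(p : ℝ)) →
      (∀ ε : ℝ, 0 < ε →
        Tendsto (fun y : ℝ => y ^ ε * |(rG μ p (Complex.I * (y : ℂ))).re|) atTop atTop) ∧
      (p = 0 →
        Tendsto (fun y : ℝ =>
            (rG μ p (Complex.I * (y : ℂ))).re / (μ (Set.Ioi y)).toReal)
          atTop (nhds (-1)))) ∧
    (RegVarying (fun y : ℝ => (μ (Set.Ioi y)).toReal) (-((p : ℝ) + 1)) →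
      RegVarying (fun y : ℝ => -(rG μ p (Complex.I * (y : ℂ))).im) (-1) ∧
      Tendsto (fun y : ℝ => y * |(rG μ p (Complex.I * (y : ℂ))).im|) atTop atTop ∧
      ∀ ε : ℝ, 0 < ε →
        Tendsto (fun y : ℝ => y ^ (1 - ε) * (rG μ p (Complex.I * (y : ℂ))).im)
          atTop (nhds 0)) := by
  obtain ⟨_, hneg, hfin, htop⟩ := hμ
  have h0 := ae_nonneg_of_Iio hneg
  have hi := integrable_pow_of_lintegral h0 hfin
  refine ⟨fun h => ⟨fun ε hε => tendsto_rpow_mul_abs_rG_re h0 hi h hε, ?_⟩,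
    fun h => ⟨regVarying_neg_rG_im h0 hi h, tendsto_mul_abs_rG_im h0 hi htop,
      fun ε hε => tendsto_rpow_mul_rG_im h0 hi h hε⟩⟩
  rintro rfl
  rw [Nat.cast_zero] at h
  refine (tendsto_integral_re_kernel_div_tail h0 h).neg.congr' ?_
  filter_upwards [eventually_gt_atTop 0] with y hy
  rw [rG_re hi hy, neg_div, zero_add, measureReal_def]
end
end
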